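/- Let D′ ⋐ D ⊂ ℝ^{2n+1} be bounded open sets, let s ≥ 2n + 4 be an integer, let m₁, m₂ ≥ 1, let F : cl(D) × ℝ^{m₁} → ℝ^{m₂} be a smooth map, let f : cl(D) → ℝ^{m₁} be a smooth function, and let c > 0. Then there exists a polynomial Q in two variables, with nonnegative coefficients and of degree at most s in each variable, such that for every smooth function g : cl(D) → ℝ^{m₁} with sup_{x ∈ D} |g(x) − f(x)| ≤ c, one has ‖F(·, f(·)) − F(·, g(·))‖_{D′,s} ≤ ‖f − g‖_{D,s} · Q(‖f‖_{D,s}, ‖g‖_{D,s}). -/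

import Mathlib

open MeasureTheory Bornology

noncomputable section

variable {E : Type*} [NormedAddCommGroup E] [NormedSpace ℝ E]

/-- The standard contact form `η₀ = dx^{2n+1} - Σ x^{n+j} dx^j` on `ℝ^{2n+1}`
(0-indexed coordinates): `η₀(x)(v) = v_{2n} - Σ_{j<n} x_{n+j} v_j`. -/
def eta0 (n : ℕ) (x v : Fin (2*n+1) → ℝ) : ℝ :=
  v ⟨2*n, by omega⟩ -
    ∑ j : Fin n, x ⟨n + j, by have := j.2; omega⟩ * v ⟨j, by have := j.2; omega⟩

/-- `dη₀ = Σ_{j<n} dx^j ∧ dx^{n+j}`. -/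
def dEta0 (n : ℕ) (u v : Fin (2*n+1) → ℝ) : ℝ :=
  ∑ j : Fin n,
    (u ⟨j, by have := j.2; omega⟩ * v ⟨n + j, by have := j.2; omega⟩ -
     u ⟨n + j, by have := j.2; omega⟩ * v ⟨j, by have := j.2; omega⟩)

/-- The horizontal vector fields: for `j < n`, `X_j = ∂_j + x_{n+j} ∂_{2n}`;
for `n ≤ j < 2n`, `X_j = ∂_j` (0-indexed). -/
def Xvec (n : ℕ) (j : Fin (2*n)) (x : Fin (2*n+1) → ℝ) : Fin (2*n+1) → ℝ :=
  if h : (j : ℕ) < n then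
    (Pi.single (⟨j, by omega⟩ : Fin (2*n+1)) 1 : Fin (2*n+1) → ℝ)
      + x ⟨n + j, by omega⟩ • (Pi.single (⟨2*n, by omega⟩ : Fin (2*n+1)) 1 : Fin (2*n+1) → ℝ)
  else
    (Pi.single (⟨j, by have := j.2; omega⟩ : Fin (2*n+1)) 1 : Fin (2*n+1) → ℝ)

/-- The horizontal derivative `X_j f`. -/
def hDeriv (n : ℕ) (j : Fin (2*n)) (f : (Fin (2*n+1) → ℝ) → E)
    (x : Fin (2*n+1) → ℝ) : E :=
  fderiv ℝ f x (Xvec n j x)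

/-- Iterated horizontal derivative `X_I f = X_{i₁} ⋯ X_{i_t} f`. -/
def XI (n : ℕ) : List (Fin (2*n)) → ((Fin (2*n+1) → ℝ) → E) → ((Fin (2*n+1) → ℝ) → E)
  | [], f => f
  | j :: I, f => hDeriv n j (XI n I f)

/-- Squared Folland–Stein norm `‖f‖_{D,s}² = Σ_{|I| ≤ s} ∫_D ‖X_I f‖²`. -/
def fsNormSq (n : ℕ) (D : Set (Fin (2*n+1) → ℝ)) (s : ℕ)
    (f : (Fin (2*n+1) → ℝ) → E) : ℝ :=
  ∑ t ∈ Finset.range (s+1), ∑ I : Fin t → Fin (2*n),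
    ∫ x in D, ‖XI n (List.ofFn I) f x‖^2

/-- The Folland–Stein norm `‖f‖_{D,s}`. -/
def fsNorm (n : ℕ) (D : Set (Fin (2*n+1) → ℝ)) (s : ℕ)
    (f : (Fin (2*n+1) → ℝ) → E) : ℝ :=
  Real.sqrt (fsNormSq n D s f)

/-- Ordinary partial derivative `∂_i f`. -/
def pDeriv (n : ℕ) (i : Fin (2*n+1)) (f : (Fin (2*n+1) → ℝ) → E)
    (x : Fin (2*n+1) → ℝ) : E :=
  fderiv ℝ f x (Pi.single i 1 : Fin (2*n+1) → ℝ)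

/-- Iterated ordinary partial derivative. -/
def pI (n : ℕ) : List (Fin (2*n+1)) → ((Fin (2*n+1) → ℝ) → E) → ((Fin (2*n+1) → ℝ) → E)
  | [], f => f
  | i :: I, f => pDeriv n i (pI n I f)

/-- The Reeb derivative `T₀ f = ∂_{2n} f` (0-indexed). -/
def T0Deriv (n : ℕ) (f : (Fin (2*n+1) → ℝ) → E) (x : Fin (2*n+1) → ℝ) : E :=
  fderiv ℝ f x (Pi.single (⟨2*n, by omega⟩ : Fin (2*n+1)) 1 : Fin (2*n+1) → ℝ)

/-- `X` is a contact vector field on `D`:  `dη₀(X, X_j) + X_j(η₀(X)) = 0` for all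
horizontal `X_j`. -/
def IsContactVF (n : ℕ) (D : Set (Fin (2*n+1) → ℝ))
    (X : (Fin (2*n+1) → ℝ) → (Fin (2*n+1) → ℝ)) : Prop :=
  ∀ j : Fin (2*n), ∀ x ∈ D,
    dEta0 n (X x) (Xvec n j x) + hDeriv n j (fun y => eta0 n y (X y)) x = 0

/-- The contact vector field with generating function `g`:
`X_g = g T₀ + Σ_j (-(X_{n+j} g) X_j + (X_j g) X_{n+j})`. -/
def genVF (n : ℕ) (g : (Fin (2*n+1) → ℝ) → ℝ) (x : Fin (2*n+1) → ℝ) :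
    Fin (2*n+1) → ℝ :=
  g x • (Pi.single (⟨2*n, by omega⟩ : Fin (2*n+1)) 1 : Fin (2*n+1) → ℝ)
  + ∑ j : Fin n,
      (-(hDeriv n (⟨n + j, by have := j.2; omega⟩ : Fin (2*n)) g x) •
          Xvec n (⟨j, by have := j.2; omega⟩ : Fin (2*n)) x
        + (hDeriv n (⟨j, by have := j.2; omega⟩ : Fin (2*n)) g x) •
          Xvec n (⟨n + j, by have := j.2; omega⟩ : Fin (2*n)) x)

abbrev VV (n : ℕ) := Fin (2*n+1) → ℝ

lemma contDiff_Xvec (n : ℕ) (j : Fin (2*n)) : ContDiff ℝ (⊤:ℕ∞) (Xvec n j) := by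
  unfold Xvec
  split_ifs with h
  · fun_prop
  · exact contDiff_const

lemma contDiffOn_hDeriv {n : ℕ} (j : Fin (2*n)) {U : Set (VV n)} (hU : IsOpen U)
    {f : VV n → E} (hf : ContDiffOn ℝ (⊤:ℕ∞) f U) : ContDiffOn ℝ (⊤:ℕ∞) (hDeriv n j f) U := by
  unfold hDeriv
  have h := hf.fderiv_of_isOpen (m := (⊤:ℕ∞)) hU (by simp)
  exact h.clm_apply (contDiff_Xvec n j).contDiffOn

lemma contDiffOn_XI {n : ℕ} (I : List (Fin (2*n))) {U : Set (VV n)} (hU : IsOpen U)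
    {f : VV n → E} (hf : ContDiffOn ℝ (⊤:ℕ∞) f U) : ContDiffOn ℝ (⊤:ℕ∞) (XI n I f) U := by
  induction I with
  | nil => exact hf
  | cons j I ih => exact contDiffOn_hDeriv j hU ih

lemma contDiff_XI {n : ℕ} (I : List (Fin (2*n)))
    {f : VV n → E} (hf : ContDiff ℝ (⊤:ℕ∞) f) : ContDiff ℝ (⊤:ℕ∞) (XI n I f) := by
  rw [← contDiffOn_univ] at hf ⊢
  exact contDiffOn_XI I isOpen_univ hf

lemma contDiff_hDeriv {n : ℕ} (j : Fin (2*n))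
    {f : VV n → E} (hf : ContDiff ℝ (⊤:ℕ∞) f) : ContDiff ℝ (⊤:ℕ∞) (hDeriv n j f) :=
  contDiff_XI [j] hf

lemma diffAt_of_on {n : ℕ} {U : Set (VV n)} (hU : IsOpen U)
    {f : VV n → E} (hf : ContDiffOn ℝ (⊤:ℕ∞) f U) {x : VV n} (hx : x ∈ U) :
    DifferentiableAt ℝ f x :=
  (hf.contDiffAt (hU.mem_nhds hx)).differentiableAt (by simp)

lemma diff_of {n : ℕ} {f : VV n → E} (hf : ContDiff ℝ (⊤:ℕ∞) f) (x : VV n) :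
    DifferentiableAt ℝ f x := hf.differentiable (by simp) x

lemma XI_congr {n : ℕ} (I : List (Fin (2*n))) {U : Set (VV n)} (hU : IsOpen U)
    {f g : VV n → E} (h : ∀ x ∈ U, f x = g x) : ∀ x ∈ U, XI n I f x = XI n I g x := by
  induction I with
  | nil => exact h
  | cons j I ih =>
    intro x hx
    have : XI n I f =ᶠ[nhds x] XI n I g := Filter.eventually_of_mem (hU.mem_nhds hx) ih
    simp only [XI, hDeriv, this.fderiv_eq]

lemma XI_append {n : ℕ} (I J : List (Fin (2*n))) (f : VV n → E) :
    XI n (I ++ J) f = XI n I (XI n J f) := by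
  induction I with
  | nil => rfl
  | cons j I ih => simp only [List.cons_append, XI, ih]

lemma XI_apply {n m : ℕ} (I : List (Fin (2*n))) {U : Set (VV n)} (hU : IsOpen U)
    {f : VV n → Fin m → ℝ} (hf : ContDiffOn ℝ (⊤:ℕ∞) f U) (i : Fin m) :
    ∀ x ∈ U, XI n I f x i = XI n I (fun y => f y i) x := by
  induction I with
  | nil => intro x _; rfl
  | cons j I ih =>
    intro x hx
    have h : (fun y => XI n I f y i) =ᶠ[nhds x] XI n I (fun y => f y i) :=
      Filter.eventually_of_mem (hU.mem_nhds hx) ih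
    have hd : DifferentiableAt ℝ (XI n I f) x := diffAt_of_on hU (contDiffOn_XI I hU hf) hx
    simp only [XI, hDeriv, ← h.fderiv_eq]
    rw [fderiv_apply hd]
    rfl

lemma XI_sub {n : ℕ} (I : List (Fin (2*n))) {U : Set (VV n)} (hU : IsOpen U)
    {f g : VV n → E} (hf : ContDiffOn ℝ (⊤:ℕ∞) f U) (hg : ContDiffOn ℝ (⊤:ℕ∞) g U) :
    ∀ x ∈ U, XI n I (fun y => f y - g y) x = XI n I f x - XI n I g x := by
  induction I with
  | nil => intro x _; rfl
  | cons j I ih =>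
    intro x hx
    have h : XI n I (fun y => f y - g y) =ᶠ[nhds x] fun y => XI n I f y - XI n I g y :=
      Filter.eventually_of_mem (hU.mem_nhds hx) ih
    simp only [XI, hDeriv, h.fderiv_eq]
    rw [fderiv_fun_sub (diffAt_of_on hU (contDiffOn_XI I hU hf) hx)
      (diffAt_of_on hU (contDiffOn_XI I hU hg) hx)]
    rfl

lemma XI_add {n : ℕ} (I : List (Fin (2*n))) {U : Set (VV n)} (hU : IsOpen U)
    {f g : VV n → E} (hf : ContDiffOn ℝ (⊤:ℕ∞) f U) (hg : ContDiffOn ℝ (⊤:ℕ∞) g U) :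
    ∀ x ∈ U, XI n I (fun y => f y + g y) x = XI n I f x + XI n I g x := by
  induction I with
  | nil => intro x _; rfl
  | cons j I ih =>
    intro x hx
    have h : XI n I (fun y => f y + g y) =ᶠ[nhds x] fun y => XI n I f y + XI n I g y :=
      Filter.eventually_of_mem (hU.mem_nhds hx) ih
    simp only [XI, hDeriv, h.fderiv_eq]
    rw [fderiv_fun_add (diffAt_of_on hU (contDiffOn_XI I hU hf) hx)
      (diffAt_of_on hU (contDiffOn_XI I hU hg) hx)]
    rfl

lemma hasCompactSupport_XI {n : ℕ} (I : List (Fin (2*n))) {f : VV n → E}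
    (hf : HasCompactSupport f) : HasCompactSupport (XI n I f) := by
  induction I with
  | nil => exact hf
  | cons j I ih =>
    refine (ih.fderiv (𝕜 := ℝ)).mono ?_
    intro x hx
    simp only [Function.mem_support, XI, hDeriv] at hx ⊢
    intro h; simp [h] at hx

lemma tsupport_XI {n : ℕ} (I : List (Fin (2*n))) {f : VV n → E} :
    tsupport (XI n I f) ⊆ tsupport f := by
  induction I with
  | nil => exact subset_rfl
  | cons j I ih =>
    refine subset_trans ?_ ih
    refine subset_trans ?_ (tsupport_fderiv_subset ℝ (f := XI n I f))
    apply closure_mono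
    intro x hx
    simp only [Function.mem_support, XI, hDeriv] at hx ⊢
    intro h; simp [h] at hx

/-- Polynomial differential expressions of weight `k`. -/
inductive Pol (n m : ℕ) : ℕ → ((VV n → Fin m → ℝ) → VV n → ℝ) → Prop
  | comp (Φ : VV n × (Fin m → ℝ) → ℝ) (hΦ : ContDiff ℝ (⊤:ℕ∞) Φ) :
      Pol n m 0 (fun u x => Φ (x, u x))
  | der (I : List (Fin (2*n))) (i : Fin m) :
      Pol n m I.length (fun u x => XI n I (fun y => u y i) x)
  | mul {k l : ℕ} {P Q} : Pol n m k P → Pol n m l Q → Pol n m (k+l) (fun u x => P u x * Q u x)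
  | add {k l r : ℕ} {P Q} : Pol n m k P → Pol n m l Q → k ≤ r → l ≤ r →
      Pol n m r (fun u x => P u x + Q u x)

lemma Pol.smooth {n m k : ℕ} {P} (h : Pol n m k P) {u : VV n → Fin m → ℝ}
    (hu : ContDiff ℝ (⊤:ℕ∞) u) : ContDiff ℝ (⊤:ℕ∞) (P u) := by
  induction h with
  | comp Φ hΦ => exact hΦ.comp (contDiff_id.prodMk hu)
  | der I i => exact contDiff_XI I (by fun_prop)
  | mul _ _ h1 h2 => exact h1.mul h2
  | add _ _ _ _ h1 h2 => exact h1.add h2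

lemma Pol.sum {n m r : ℕ} {ι : Type*} (S : Finset ι) (P : ι → (VV n → Fin m → ℝ) → VV n → ℝ)
    (h : ∀ i ∈ S, Pol n m r (P i)) : Pol n m r (fun u x => ∑ i ∈ S, P i u x) := by
  classical
  induction S using Finset.induction_on with
  | empty =>
    have h0 : Pol n m 0 (fun u x => (0:ℝ)) := Pol.comp (fun _ => 0) contDiff_const
    simpa using h0.add h0 (Nat.zero_le r) (Nat.zero_le r)
  | insert a S ha ih =>
    simp only [Finset.sum_insert ha]
    exact Pol.add (h a (by simp)) (ih fun i hi => h i (by simp [hi])) le_rfl le_rfl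

lemma Pol.hDeriv {n m k : ℕ} {P} (h : Pol n m k P) (j : Fin (2*n)) :
    ∃ Q, Pol n m (k+1) Q ∧ ∀ u : VV n → Fin m → ℝ, ContDiff ℝ (⊤:ℕ∞) u →
      hDeriv n j (P u) = Q u := by
  induction h with
  | comp Φ hΦ =>
    have h1 : Pol n m 0 (fun u x => (fun p : VV n × (Fin m → ℝ) =>
        fderiv ℝ Φ p (Xvec n j p.1, 0)) (x, u x)) := by
      refine Pol.comp (fun p : VV n × (Fin m → ℝ) => fderiv ℝ Φ p (Xvec n j p.1, 0)) ?_
      exact (hΦ.fderiv_right (m := (⊤:ℕ∞)) (by simp)).clm_apply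
        (((contDiff_Xvec n j).comp contDiff_fst).prodMk contDiff_const)
    have h2 : ∀ i, Pol n m 1 (fun u x => (fun p : VV n × (Fin m → ℝ) =>
        fderiv ℝ Φ p (0, Pi.single i 1)) (x, u x) * XI n [j] (fun y => u y i) x) := by
      intro i
      have := (Pol.comp (n := n) (m := m) (fun p : VV n × (Fin m → ℝ) =>
        fderiv ℝ Φ p (0, Pi.single i 1)) ((hΦ.fderiv_right (m := (⊤:ℕ∞)) (by simp)).clm_apply
        contDiff_const)).mul (Pol.der [j] i)
      simpa using this
    refine ⟨_, Pol.add h1 (Pol.sum Finset.univ _ fun i _ => h2 i) (by simp) (by simp), ?_⟩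
    intro u hu
    funext x
    have hd : HasFDerivAt (fun x => Φ (x, u x))
      ((fderiv ℝ Φ (x, u x)).comp ((ContinuousLinearMap.id ℝ _).prod (fderiv ℝ u x))) x :=
      HasFDerivAt.comp x (hΦ.differentiable (by simp) (x, u x)).hasFDerivAt
        ((hasFDerivAt_id x).prodMk (diff_of hu x).hasFDerivAt)
    simp only [_root_.hDeriv, hd.fderiv, XI]
    simp only [ContinuousLinearMap.comp_apply, ContinuousLinearMap.prod_apply,
      ContinuousLinearMap.id_apply]
    have e1 : ((Xvec n j x, fderiv ℝ u x (Xvec n j x)) : VV n × (Fin m → ℝ))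
      = (Xvec n j x, 0) + ∑ i, (fderiv ℝ u x (Xvec n j x) i) • (0, Pi.single i 1) := by
      ext1
      · simp [Prod.fst_sum]
      · simp [Prod.snd_sum]
        ext a
        simp [Finset.sum_apply, Pi.single_apply]
    rw [e1, map_add, map_sum]
    congr 1
    refine Finset.sum_congr rfl fun i _ => ?_
    rw [map_smul, fderiv_apply (diff_of hu x)]
    simp [mul_comm]
  | der I i =>
    exact ⟨_, Pol.der (j :: I) i, fun u hu => rfl⟩
  | @mul k l P Q hP hQ h1 h2 =>
    obtain ⟨P', hP', e1⟩ := h1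
    obtain ⟨Q', hQ', e2⟩ := h2
    refine ⟨_, Pol.add (r := k + l + 1) (hP.mul hQ') (hP'.mul hQ) (by omega) (by omega), ?_⟩
    intro u hu
    funext x
    rw [← e1 u hu, ← e2 u hu]
    simp only [_root_.hDeriv]
    rw [fderiv_fun_mul (diff_of (hP.smooth hu) x) (diff_of (hQ.smooth hu) x)]
    simp [mul_comm]
  | @add k l r P Q hP hQ hk hl h1 h2 =>
    obtain ⟨P', hP', e1⟩ := h1
    obtain ⟨Q', hQ', e2⟩ := h2
    refine ⟨_, Pol.add (r := r + 1) hP' hQ' (by omega) (by omega), ?_⟩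
    intro u hu
    funext x
    rw [← e1 u hu, ← e2 u hu]
    simp only [_root_.hDeriv]
    rw [fderiv_fun_add (diff_of (hP.smooth hu) x) (diff_of (hQ.smooth hu) x)]
    simp

lemma Pol.XI {n m k : ℕ} {P} (h : Pol n m k P) (I : List (Fin (2*n))) :
    ∃ Q, Pol n m (k + I.length) Q ∧ ∀ u : VV n → Fin m → ℝ, ContDiff ℝ (⊤:ℕ∞) u →
      XI n I (P u) = Q u := by
  induction I with
  | nil => exact ⟨P, h, fun u hu => rfl⟩
  | cons j I ih =>
    obtain ⟨Q, hQ, e⟩ := ih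
    obtain ⟨R, hR, e'⟩ := hQ.hDeriv j
    refine ⟨R, hR, fun u hu => ?_⟩
    rw [← e' u hu, ← e u hu]
    rfl

open scoped NNReal ENNReal

open scoped NNReal ENNReal

/-- The exponent `2s/k`. -/
def pe (s k : ℕ) : ℝ≥0∞ := (2*s : ℝ≥0∞)/k

lemma pe_inv (s k : ℕ) (hs : 1 ≤ s) : (pe s k)⁻¹ = (k : ℝ≥0∞) / (2*s) := by
  unfold pe
  rw [ENNReal.inv_div]
  · left; simp
  · right; simp; omega

lemma pe_zero (s : ℕ) (hs : 1 ≤ s) : pe s 0 = ∞ := by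
  rw [← inv_inv (pe s 0), pe_inv s 0 hs]; simp

lemma pe_self (s : ℕ) (hs : 1 ≤ s) : pe s s = 2 := by
  unfold pe
  rw [ENNReal.mul_div_cancel_right] <;> simp
  omega

lemma pe_anti (s : ℕ) {k l : ℕ} (h : k ≤ l) : pe s l ≤ pe s k := by
  unfold pe
  gcongr

lemma pe_holder (s : ℕ) (hs : 1 ≤ s) (k l : ℕ) : ENNReal.HolderTriple (pe s k) (pe s l) (pe s (k+l)) := by
  constructor
  rw [pe_inv s _ hs, pe_inv s _ hs, pe_inv s _ hs, ← ENNReal.add_div]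
  push_cast
  rfl

lemma eLpNorm_mul_pe {n : ℕ} {μ : Measure (VV n)} (s : ℕ) (hs : 1 ≤ s) (k l : ℕ) {u v : VV n → ℝ}
    (hu : AEStronglyMeasurable u μ) (hv : AEStronglyMeasurable v μ) :
    eLpNorm (fun x => u x * v x) (pe s (k+l)) μ ≤ eLpNorm u (pe s k) μ * eLpNorm v (pe s l) μ := by
  have := pe_holder s hs k l
  exact eLpNorm_smul_le_mul_eLpNorm (φ := u) hv hu

/-- Bundled hypotheses for the estimates. -/
structure PHyp (n m s : ℕ) (D' : Set (VV n)) (A β W : ℝ≥0) (f g : VV n → Fin m → ℝ) : Prop where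
  f_smooth : ContDiff ℝ (⊤:ℕ∞) f
  g_smooth : ContDiff ℝ (⊤:ℕ∞) g
  hβ : 1 ≤ β
  f_bd : ∀ x ∈ D', ‖f x‖ ≤ A
  g_bd : ∀ x ∈ D', ‖g x‖ ≤ A
  w_bd : ∀ x ∈ D', ‖f x - g x‖ ≤ A * W
  f_der : ∀ I : List (Fin (2*n)), ∀ i, I.length ≤ s →
    eLpNorm (XI n I (fun y => f y i)) (pe s I.length) (volume.restrict D') ≤ A * β^I.length
  g_der : ∀ I : List (Fin (2*n)), ∀ i, I.length ≤ s →
    eLpNorm (XI n I (fun y => g y i)) (pe s I.length) (volume.restrict D') ≤ A * β^I.length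
  w_der : ∀ I : List (Fin (2*n)), ∀ i, I.length ≤ s →
    eLpNorm (fun x => XI n I (fun y => f y i) x - XI n I (fun y => g y i) x)
      (pe s I.length) (volume.restrict D') ≤ A * W * β^I.length

lemma lip_aux {n m : ℕ} {D' : Set (VV n)} (hD'b : IsBounded D') (A : ℝ≥0)
    (Φ : VV n × (Fin m → ℝ) → ℝ) (hΦ : ContDiff ℝ (⊤:ℕ∞) Φ) :
    ∃ C : ℝ≥0, (∀ x ∈ D', ∀ y, ‖y‖ ≤ A → ‖Φ (x, y)‖ ≤ C) ∧
      (∀ x ∈ D', ∀ y z, ‖y‖ ≤ A → ‖z‖ ≤ A → ‖Φ (x, y) - Φ (x, z)‖ ≤ C * ‖y - z‖) := by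
  obtain ⟨R, hR⟩ := hD'b.subset_closedBall (0 : VV n)
  have hK : IsCompact (Metric.closedBall (0 : VV n × (Fin m → ℝ)) (max R A)) :=
    isCompact_closedBall _ _
  obtain ⟨C1, h1⟩ := hK.exists_bound_of_continuousOn hΦ.continuous.continuousOn
  obtain ⟨C2, h2⟩ := hK.exists_bound_of_continuousOn
    (hΦ.continuous_fderiv (by simp)).continuousOn
  have hmem : ∀ x ∈ D', ∀ y : Fin m → ℝ, ‖y‖ ≤ A →
      (x, y) ∈ Metric.closedBall (0 : VV n × (Fin m → ℝ)) (max R A) := by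
    intro x hx y hy
    have := hR hx
    simp only [mem_closedBall_zero_iff] at this ⊢
    simp only [Prod.norm_def, max_le_iff]
    exact ⟨this.trans (le_max_left _ _), hy.trans (le_max_right _ _)⟩
  refine ⟨(max C1 C2).toNNReal, ?_, ?_⟩
  · intro x hx y hy
    exact (h1 _ (hmem x hx y hy)).trans ((le_max_left _ _).trans (Real.le_coe_toNNReal _))
  · intro x hx y z hy hz
    have := (convex_closedBall (0 : VV n × (Fin m → ℝ)) (max R A)).norm_image_sub_le_of_norm_fderiv_le
      (f := Φ) (𝕜 := ℝ) (fun p _ => hΦ.differentiable (by simp) p) h2 (hmem x hx z hz) (hmem x hx y hy)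
    refine this.trans ?_
    have e : ‖((x, y) : VV n × (Fin m → ℝ)) - (x, z)‖ = ‖y - z‖ := by
      simp [Prod.norm_def]
    rw [e]
    gcongr
    exact (le_max_right _ _).trans (Real.le_coe_toNNReal _)

lemma Pol.est {n m k : ℕ} {P} (h : Pol n m k P) (s : ℕ) (hs : 1 ≤ s) {D' : Set (VV n)}
    (hD' : MeasurableSet D') (hD'b : IsBounded D') (A : ℝ≥0) (hks : k ≤ s) :
    ∃ C : ℝ≥0, ∀ (β W : ℝ≥0) (f g : VV n → Fin m → ℝ), PHyp n m s D' A β W f g →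
      eLpNorm (P f) (pe s k) (volume.restrict D') ≤ C * β^k ∧
      eLpNorm (P g) (pe s k) (volume.restrict D') ≤ C * β^k ∧
      eLpNorm (fun x => P f x - P g x) (pe s k) (volume.restrict D') ≤ C * W * β^k := by
  induction h with
  | comp Φ hΦ =>
    obtain ⟨C, h1, h2⟩ := lip_aux hD'b A Φ hΦ
    refine ⟨max C (C * A), fun β W f g H => ?_⟩
    rw [pe_zero s hs]
    simp only [eLpNorm_exponent_top, pow_zero, mul_one]
    refine ⟨?_, ?_, ?_⟩
    · refine le_trans (eLpNormEssSup_le_of_ae_nnnorm_bound (C := C) ?_) (by simp)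
      refine (ae_restrict_iff' hD').2 (.of_forall fun x hx => ?_)
      exact h1 x hx _ (H.f_bd x hx)
    · refine le_trans (eLpNormEssSup_le_of_ae_nnnorm_bound (C := C) ?_) (by simp)
      refine (ae_restrict_iff' hD').2 (.of_forall fun x hx => ?_)
      exact h1 x hx _ (H.g_bd x hx)
    · refine le_trans (eLpNormEssSup_le_of_ae_nnnorm_bound (C := C * A * W) ?_) ?_
      · refine (ae_restrict_iff' hD').2 (.of_forall fun x hx => ?_)
        have := h2 x hx _ _ (H.f_bd x hx) (H.g_bd x hx)
        refine NNReal.coe_le_coe.1 (this.trans ?_)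
        push_cast
        rw [mul_assoc]
        gcongr
        exact H.w_bd x hx
      · rw [ENNReal.coe_mul]
        gcongr
        exact le_max_right _ _
  | der I i =>
    exact ⟨A, fun β W f g H => ⟨H.f_der I i hks, H.g_der I i hks, H.w_der I i hks⟩⟩
  | @mul k l P Q hP hQ h1 h2 =>
    obtain ⟨C1, h1⟩ := h1 (by omega)
    obtain ⟨C2, h2⟩ := h2 (by omega)
    refine ⟨2 * (C1 * C2), fun β W f g H => ?_⟩
    obtain ⟨a1, a2, a3⟩ := h1 β W f g H
    obtain ⟨b1, b2, b3⟩ := h2 β W f g H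
    have mP : ∀ u, ContDiff ℝ (⊤:ℕ∞) u → AEStronglyMeasurable (P u) (volume.restrict D') :=
      fun u hu => (hP.smooth hu).continuous.aestronglyMeasurable
    have mQ : ∀ u, ContDiff ℝ (⊤:ℕ∞) u → AEStronglyMeasurable (Q u) (volume.restrict D') :=
      fun u hu => (hQ.smooth hu).continuous.aestronglyMeasurable
    have key : ∀ u v : VV n → ℝ, ∀ c d : ℝ≥0∞, AEStronglyMeasurable u (volume.restrict D') →
      AEStronglyMeasurable v (volume.restrict D') →
      eLpNorm u (pe s k) (volume.restrict D') ≤ c * β^k →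
      eLpNorm v (pe s l) (volume.restrict D') ≤ d * β^l →
      eLpNorm (fun x => u x * v x) (pe s (k+l)) (volume.restrict D') ≤ (c * d) * β^(k+l) := by
      intro u v c d hu hv huc hvd
      refine (eLpNorm_mul_pe s hs k l hu hv).trans ((mul_le_mul' huc hvd).trans (le_of_eq ?_))
      rw [pow_add]; ring
    have h12 : (C1 * C2 : ℝ≥0∞) ≤ ((2 * (C1 * C2) : ℝ≥0) : ℝ≥0∞) := by
      push_cast
      rw [two_mul]
      exact le_self_add
    refine ⟨(key _ _ _ _ (mP f H.f_smooth) (mQ f H.f_smooth) a1 b1).trans (by gcongr),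
      (key _ _ _ _ (mP g H.g_smooth) (mQ g H.g_smooth) a2 b2).trans (by gcongr), ?_⟩
    have e : (fun x => P f x * Q f x - P g x * Q g x) =
      (fun x => (P f x - P g x) * Q f x) + (fun x => P g x * (Q f x - Q g x)) := by
      funext x; simp only [Pi.add_apply]; ring
    rw [e]
    have k1 := key _ _ _ _ ((mP f H.f_smooth).sub (mP g H.g_smooth)) (mQ f H.f_smooth) a3 b1
    have k2 := key _ _ _ _ (mP g H.g_smooth) ((mQ f H.f_smooth).sub (mQ g H.g_smooth)) a2 b3
    have hp1 : 1 ≤ pe s (k+l) := by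
      have : pe s s ≤ pe s (k+l) := pe_anti s hks
      rw [pe_self s hs] at this
      exact le_trans (by norm_num) this
    refine (eLpNorm_add_le ?_ ?_ hp1).trans ((add_le_add k1 k2).trans (le_of_eq ?_))
    · exact ((mP f H.f_smooth).sub (mP g H.g_smooth)).mul (mQ f H.f_smooth)
    · exact (mP g H.g_smooth).mul ((mQ f H.f_smooth).sub (mQ g H.g_smooth))
    · push_cast; ring
  | @add k l r P Q hP hQ hk hl h1 h2 =>
    obtain ⟨C1, h1⟩ := h1 (by omega)
    obtain ⟨C2, h2⟩ := h2 (by omega)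
    have hfin : volume D' < ∞ := hD'b.measure_lt_top
    have hV : ∀ j, j ≤ r → ∃ V : ℝ≥0, ∀ u : VV n → ℝ, AEStronglyMeasurable u (volume.restrict D') →
        eLpNorm u (pe s r) (volume.restrict D') ≤ V * eLpNorm u (pe s j) (volume.restrict D') := by
      intro j hj
      have hpp := pe_anti s hj
      have hex : 0 ≤ 1 / (pe s r).toReal - 1 / (pe s j).toReal := by
        have e : ∀ a : ℕ, 1 / (pe s a).toReal = a / (2 * s) := by
          intro a
          rw [one_div, ← ENNReal.toReal_inv, pe_inv s a hs]
          simp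
        rw [e, e, sub_nonneg]
        gcongr
      refine ⟨((volume D') ^ (1 / (pe s r).toReal - 1 / (pe s j).toReal)).toNNReal, fun u hu => ?_⟩
      rw [ENNReal.coe_toNNReal (ENNReal.rpow_ne_top_of_nonneg hex hfin.ne)]
      refine le_of_le_of_eq ?_ (mul_comm _ _)
      simpa using eLpNorm_le_eLpNorm_mul_rpow_measure_univ hpp hu
    obtain ⟨V1, hV1⟩ := hV k hk
    obtain ⟨V2, hV2⟩ := hV l hl
    refine ⟨V1 * C1 + V2 * C2, fun β W f g H => ?_⟩
    obtain ⟨a1, a2, a3⟩ := h1 β W f g H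
    obtain ⟨b1, b2, b3⟩ := h2 β W f g H
    have mP : ∀ u, ContDiff ℝ (⊤:ℕ∞) u → AEStronglyMeasurable (P u) (volume.restrict D') :=
      fun u hu => (hP.smooth hu).continuous.aestronglyMeasurable
    have mQ : ∀ u, ContDiff ℝ (⊤:ℕ∞) u → AEStronglyMeasurable (Q u) (volume.restrict D') :=
      fun u hu => (hQ.smooth hu).continuous.aestronglyMeasurable
    have hp1 : 1 ≤ pe s r := by
      have : pe s s ≤ pe s r := pe_anti s hks
      rw [pe_self s hs] at this
      exact le_trans (by norm_num) this
    have hβ : (1 : ℝ≥0∞) ≤ β := by exact_mod_cast H.hβ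
    have key : ∀ u v : VV n → ℝ, ∀ c : ℝ≥0∞, AEStronglyMeasurable u (volume.restrict D') →
      AEStronglyMeasurable v (volume.restrict D') →
      eLpNorm u (pe s k) (volume.restrict D') ≤ C1 * c * β^k →
      eLpNorm v (pe s l) (volume.restrict D') ≤ C2 * c * β^l →
      eLpNorm (fun x => u x + v x) (pe s r) (volume.restrict D') ≤
        ((V1 * C1 + V2 * C2 : ℝ≥0) : ℝ≥0∞) * c * β^r := by
      intro u v c hu hv huc hvd
      refine (eLpNorm_add_le hu hv hp1).trans ?_
      calc _ ≤ V1 * (C1 * c * β^k) + V2 * (C2 * c * β^l) := by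
            refine add_le_add ((hV1 u hu).trans ?_) ((hV2 v hv).trans ?_) <;> gcongr
        _ ≤ V1 * (C1 * c * β^r) + V2 * (C2 * c * β^r) := by gcongr
        _ = _ := by push_cast; ring
    refine ⟨?_, ?_, ?_⟩
    · simpa using key _ _ 1 (mP f H.f_smooth) (mQ f H.f_smooth) (by simpa using a1) (by simpa using b1)
    · simpa using key _ _ 1 (mP g H.g_smooth) (mQ g H.g_smooth) (by simpa using a2) (by simpa using b2)
    · have := key _ _ W ((mP f H.f_smooth).sub (mP g H.g_smooth))
        ((mQ f H.f_smooth).sub (mQ g H.g_smooth)) a3 b3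
      refine le_of_eq_of_le ?_ this
      congr 1
      funext x
      simp only [Pi.sub_apply]
      ring

lemma integral_mul_fderiv_zero {n : ℕ} (c h : VV n → ℝ) (hc : ContDiff ℝ 1 c) (hh : ContDiff ℝ 1 h)
    (hs : HasCompactSupport h) (v : VV n) (hv : ∀ x, fderiv ℝ c x v = 0) :
    Integrable (fun x => c x * fderiv ℝ h x v) ∧ ∫ x, c x * fderiv ℝ h x v = 0 := by
  have hd : Continuous (fun x => fderiv ℝ h x v) :=
    (hh.continuous_fderiv (by simp)).clm_apply continuous_const
  have hds : HasCompactSupport (fun x => fderiv ℝ h x v) := by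
    refine (hs.fderiv (𝕜 := ℝ)).mono ?_
    intro x hx
    simp only [Function.mem_support] at hx ⊢
    intro h; simp [h] at hx
  have i1 : Integrable (fun x => c x * fderiv ℝ h x v) :=
    (hc.continuous.mul hd).integrable_of_hasCompactSupport hds.mul_left
  refine ⟨i1, ?_⟩
  rw [integral_mul_fderiv_eq_neg_fderiv_mul_of_integrable]
  · simp [hv]
  · simp [hv]
  · exact i1
  · exact (hc.continuous.mul hh.continuous).integrable_of_hasCompactSupport hs.mul_left
  · exact fun x _ => hc.differentiable (by simp) x
  · exact fun x _ => hh.differentiable (by simp) x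

lemma integral_hDeriv_zero {n : ℕ} (j : Fin (2*n)) (h : VV n → ℝ) (hh : ContDiff ℝ 1 h)
    (hs : HasCompactSupport h) : ∫ x, hDeriv n j h x = 0 := by
  unfold hDeriv Xvec
  have key1 := fun v => integral_mul_fderiv_zero (fun _ => 1) h contDiff_const hh hs v (by simp)
  simp only [one_mul] at key1
  split_ifs with hj
  · have key2 := integral_mul_fderiv_zero (fun x : VV n => x ⟨n + j, by omega⟩) h (by fun_prop) hh hs
      (Pi.single (⟨2*n, by omega⟩ : Fin (2*n+1)) 1) (by
        intro x
        have hpr : HasFDerivAt (fun x : VV n => x ⟨n + j, by omega⟩)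
          (ContinuousLinearMap.proj (R := ℝ) (φ := fun _ : Fin (2*n+1) => ℝ) ⟨n + j, by omega⟩) x :=
          hasFDerivAt_apply _ _
        rw [hpr.fderiv, ContinuousLinearMap.proj_apply, Pi.single_apply, if_neg]
        simp
        omega)
    simp only [map_add, map_smul, smul_eq_mul]
    rw [integral_add (key1 _).1 key2.1, (key1 _).2, key2.2, add_zero]
  · exact (key1 _).2

lemma hasDerivAt_phi {p : ℝ} (hp : 2 < p) (t : ℝ) :
    HasDerivAt (fun t : ℝ => |t|^(p-2) * t) ((p-1) * |t|^(p-2)) t := by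
  have hcont : Continuous fun t : ℝ => |t|^(p-2) :=
    continuous_abs.rpow_const (fun x => Or.inr (by linarith))
  refine hasDerivAt_of_hasDerivAt_of_ne' (x := 0) (f := fun t : ℝ => |t|^(p-2) * t)
    (g := fun t => (p-1) * |t|^(p-2)) ?_ (hcont.mul continuous_id).continuousAt
    (hcont.const_mul _).continuousAt t
  intro y hy
  have h1 : HasDerivAt (fun t : ℝ => |t|^(p-2)) ((SignType.sign y : ℝ) * (p-2) * |y|^(p-2-1)) y :=
    (hasDerivAt_abs hy).rpow_const (Or.inl (abs_ne_zero.2 hy))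
  refine (h1.mul (hasDerivAt_id y)).congr_deriv ?_
  simp only [id, mul_one]
  have h2 : |y|^(p-2) = |y|^(p-2-1) * |y| := by
    rw [← Real.rpow_add_one (abs_ne_zero.2 hy)]; ring_nf
  have h3 : (SignType.sign y : ℝ) * y = |y| := sign_mul_self y
  rw [h2, ← h3]
  ring

lemma ibp_formula {n : ℕ} (j : Fin (2*n)) (u : VV n → ℝ) (hu : ContDiff ℝ (⊤:ℕ∞) u)
    (hs : HasCompactSupport u) {p : ℝ} (hp : 2 < p) :
    ∫ x, ‖hDeriv n j u x‖^p = -(p-1) * ∫ x, u x * (‖hDeriv n j u x‖^(p-2) *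
      hDeriv n j (hDeriv n j u) x) := by
  set v := hDeriv n j u with hv
  have hvs : ContDiff ℝ (⊤:ℕ∞) v := contDiff_hDeriv j hu
  have hcont : Continuous fun t : ℝ => |t|^(p-2) :=
    continuous_abs.rpow_const (fun x => Or.inr (by linarith))
  have hvc : HasCompactSupport v := hasCompactSupport_XI [j] hs
  have hφ : ContDiff ℝ 1 (fun t : ℝ => |t|^(p-2) * t) := by
    rw [contDiff_one_iff_deriv]
    refine ⟨fun t => (hasDerivAt_phi hp t).differentiableAt, ?_⟩
    rw [funext fun t => (hasDerivAt_phi hp t).deriv]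
    exact hcont.const_mul _
  have hH : ContDiff ℝ 1 (fun x => u x * (|v x|^(p-2) * v x)) :=
    (hu.of_le (by exact_mod_cast le_top)).mul (hφ.comp (hvs.of_le (by exact_mod_cast le_top)))
  have h0 := integral_hDeriv_zero j _ hH hs.mul_right
  have e : ∀ x, hDeriv n j (fun x => u x * (|v x|^(p-2) * v x)) x =
      ‖v x‖^p + (p-1) * (u x * (‖v x‖^(p-2) * hDeriv n j v x)) := by
    intro x
    have d1 : HasFDerivAt u (fderiv ℝ u x) x := (diff_of hu x).hasFDerivAt
    have d2 := (hasDerivAt_phi hp (v x)).comp_hasFDerivAt x (diff_of hvs x).hasFDerivAt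
    have d3 := d1.mul d2
    have e1 : |v x|^p = |v x|^(p-2) * v x * v x := by
      rw [mul_assoc, ← abs_mul_abs_self, ← pow_two, ← Real.rpow_natCast, ← Real.rpow_add_of_nonneg (abs_nonneg _) (by linarith) (by simp)]
      norm_num
    have d4 : hDeriv n j (fun x => u x * (|v x|^(p-2) * v x)) x = _ :=
      congrArg (fun L : VV n →L[ℝ] ℝ => L (Xvec n j x)) d3.fderiv
    rw [d4]
    have e2 : (fderiv ℝ u x) (Xvec n j x) = v x := rfl
    simp only [hDeriv, Real.norm_eq_abs, Function.comp]
    simp [e2, e1]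
    ring
  rw [funext e] at h0
  have hXv : ContDiff ℝ (⊤:ℕ∞) (hDeriv n j v) := contDiff_hDeriv j hvs
  rw [integral_add, integral_const_mul] at h0
  · linarith
  · refine Continuous.integrable_of_hasCompactSupport ?_ ?_
    · exact hvs.continuous.norm.rpow_const (fun x => Or.inr (by linarith))
    · refine hvc.mono ?_
      intro x hx
      simp only [Function.mem_support] at hx ⊢
      intro h; apply hx; simp [h]; rw [Real.zero_rpow (by linarith)]
  · refine Continuous.integrable_of_hasCompactSupport ?_ (hs.mul_right.mul_left)
    exact (hu.continuous.mul ((hcont.comp hvs.continuous).mul hXv.continuous)).const_mul _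

lemma gn_base {n : ℕ} (s k : ℕ) (hk : 1 ≤ k) (hks : k < s) (j : Fin (2*n)) (u : VV n → ℝ)
    (hu : ContDiff ℝ (⊤:ℕ∞) u) (hs : HasCompactSupport u) :
    eLpNorm (hDeriv n j u) (pe s k) volume ^ 2 ≤ (2*s : ℝ≥0) * (eLpNorm u (pe s (k-1)) volume *
      eLpNorm (hDeriv n j (hDeriv n j u)) (pe s (k+1)) volume) := by
  have hs1 : 1 ≤ s := by omega
  set p : ℝ := 2*s/k with hp
  have hk0 : (0:ℝ) < k := by exact_mod_cast hk
  have hks' : (k:ℝ) < s := by exact_mod_cast hks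
  have hp2 : 2 < p := by rw [hp, lt_div_iff₀ hk0]; linarith
  have hppe : ENNReal.ofReal p = pe s k := by
    rw [hp, ENNReal.ofReal_div_of_pos hk0, ENNReal.ofReal_mul (by norm_num)]
    simp [pe]
  have hpe1 : pe s (2*s) = 1 := by
    unfold pe
    push_cast
    apply ENNReal.div_self <;> simp
    · omega
    · exact ENNReal.mul_ne_top (by simp) (by simp)
  have hform := ibp_formula j u hu hs hp2
  set v := hDeriv n j u with hv
  set w := hDeriv n j v with hw
  have hvs : ContDiff ℝ (⊤:ℕ∞) v := contDiff_hDeriv j hu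
  have hws : ContDiff ℝ (⊤:ℕ∞) w := contDiff_hDeriv j hvs
  have hvc : HasCompactSupport v := hasCompactSupport_XI [j] hs
  set A := eLpNorm v (pe s k) volume with hA
  have hAfin : A ≠ ∞ := (hvs.continuous.memLp_of_hasCompactSupport hvc).eLpNorm_ne_top
  have hnc : Continuous (fun x => ‖v x‖^(p-2)) :=
    hvs.continuous.norm.rpow_const (fun x => Or.inr (by linarith))
  have e1 : A^p = ENNReal.ofReal (∫ x, ‖v x‖^p) := by
    have := eLpNorm_norm_rpow (μ := volume) (p := 1) v (q := p) (by linarith)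
    rw [one_mul, hppe] at this
    rw [hA, ← this, eLpNorm_one_eq_lintegral_enorm, ← ofReal_integral_norm_eq_lintegral_enorm]
    · congr 2
      funext x
      rw [Real.norm_of_nonneg (by positivity)]
    · refine Continuous.integrable_of_hasCompactSupport ?_ ?_
      · exact hvs.continuous.norm.rpow_const (fun x => Or.inr (by linarith))
      · refine hvc.mono ?_
        intro x hx
        simp only [Function.mem_support] at hx ⊢
        intro h; apply hx; simp [h]; rw [Real.zero_rpow (by linarith)]
  have e2 : ENNReal.ofReal (∫ x, ‖v x‖^p) ≤
      (2*s : ℝ≥0) * eLpNorm (fun x => u x * (‖v x‖^(p-2) * w x)) 1 volume := by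
    rw [eLpNorm_one_eq_lintegral_enorm, ← ofReal_integral_norm_eq_lintegral_enorm, hform]
    · rw [← ENNReal.ofReal_coe_nnreal, ← ENNReal.ofReal_mul (by positivity)]
      apply ENNReal.ofReal_le_ofReal
      refine (le_abs_self _).trans ?_
      rw [abs_mul]
      gcongr
      · rw [abs_neg, abs_of_nonneg (by linarith)]
        push_cast
        have : p ≤ 2 * s := div_le_self (by positivity) (by exact_mod_cast hk)
        linarith
      · exact norm_integral_le_integral_norm (fun x => u x * (‖v x‖^(p-2) * w x))
    · refine Continuous.integrable_of_hasCompactSupport ?_ (hs.mul_right)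
      exact hu.continuous.mul (hnc.mul hws.continuous)
  have e3 : eLpNorm (fun x => u x * (‖v x‖^(p-2) * w x)) 1 volume ≤
      eLpNorm u (pe s (k-1)) volume * (A^(p-2) * eLpNorm w (pe s (k+1)) volume) := by
    have i1 := eLpNorm_mul_pe (μ := volume) s hs1 (k-1) ((2*s-2*k)+(k+1)) (u := u)
      (v := fun x => ‖v x‖^(p-2) * w x) hu.continuous.aestronglyMeasurable
      (hnc.mul hws.continuous).aestronglyMeasurable
    have i2 := eLpNorm_mul_pe (μ := volume) s hs1 (2*s-2*k) (k+1) (u := fun x => ‖v x‖^(p-2))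
      (v := w) hnc.aestronglyMeasurable hws.continuous.aestronglyMeasurable
    rw [show (k-1) + ((2*s-2*k)+(k+1)) = 2*s by omega, hpe1] at i1
    refine i1.trans ?_
    gcongr
    refine i2.trans ?_
    gcongr
    rw [eLpNorm_norm_rpow v (by linarith)]
    have : pe s (2*s-2*k) * ENNReal.ofReal (p-2) = pe s k := by
      have hd : (0:ℝ) < ((2*s-2*k : ℕ) : ℝ) := by
        have : 0 < 2*s-2*k := by omega
        exact_mod_cast this
      have : pe s (2*s-2*k) = ENNReal.ofReal (2*s/((2*s-2*k : ℕ) : ℝ)) := by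
        rw [ENNReal.ofReal_div_of_pos hd, ENNReal.ofReal_mul (by norm_num), ENNReal.ofReal_natCast]
        simp [pe]
      rw [this, ← hppe, ← ENNReal.ofReal_mul (by positivity)]
      congr 1
      rw [hp]
      rw [Nat.cast_sub (by omega)] at hd ⊢
      push_cast at hd ⊢
      have : (s:ℝ) - k ≠ 0 := by linarith
      field_simp
    rw [this]
  by_cases hA0 : A = 0
  · rw [hA0]; simp
  have e4 : A^p = A^(p-2) * A^2 := by
    rw [← ENNReal.rpow_natCast, ← ENNReal.rpow_add _ _ hA0 hAfin]
    norm_num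
  have e5 : A^(p-2) * A^2 ≤ A^(p-2) * ((2*s : ℝ≥0) * (eLpNorm u (pe s (k-1)) volume *
      eLpNorm w (pe s (k+1)) volume)) := by
    rw [← e4, e1]
    refine e2.trans ((mul_le_mul_right e3 _).trans (le_of_eq ?_))
    ring
  refine (ENNReal.mul_le_mul_iff_right ?_ ?_).1 e5
  · exact (ENNReal.rpow_pos (pos_iff_ne_zero.2 hA0) hAfin).ne'
  · exact ENNReal.rpow_ne_top_of_nonneg (by linarith) hAfin

lemma chain_aux (s : ℕ) (a : ℕ → ℝ) (C A β : ℝ) (ha : ∀ k, 0 ≤ a k) (hC : 1 ≤ C) (hA : 0 ≤ A)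
    (hβ : 1 ≤ β) (h0 : a 0 ≤ A) (hs : a s ≤ A * β^s)
    (hlc : ∀ k, 1 ≤ k → k < s → a k^2 ≤ C * (a (k-1) * a (k+1))) :
    ∀ k ≤ s, a k ≤ C^(s*s) * A * β^k := by
  classical
  have hC0 : 0 < C := by linarith
  have hβ0 : 0 < β := by linarith
  set m : ℕ → ℝ := fun k => a k * C^(k*k) / β^k with hm
  have hm0 : ∀ k, 0 ≤ m k := fun k => by have := ha k; positivity
  suffices H : ∀ k ≤ s, m k ≤ C^(s*s) * A by
    intro k hk
    have h1 := H k hk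
    rw [hm] at h1
    simp only at h1
    rw [div_le_iff₀ (by positivity)] at h1
    refine le_trans ?_ h1
    exact le_mul_of_one_le_right (ha k) (one_le_pow₀ hC)
  have hex : ∃ k, k ≤ s ∧ ∀ l ≤ s, m l ≤ m k := by
    obtain ⟨k, hk, h⟩ := Finset.exists_max_image (Finset.range (s+1)) m ⟨0, by simp⟩
    exact ⟨k, by simpa [Nat.lt_succ_iff] using hk, fun l hl => h l (by simpa [Nat.lt_succ_iff] using hl)⟩
  obtain ⟨hks, hmax⟩ := Nat.find_spec hex
  set k := Nat.find hex with hk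
  by_contra hcon
  push Not at hcon
  obtain ⟨l, hl, hlB⟩ := hcon
  have hkB : C^(s*s) * A < m k := hlB.trans_le (hmax l hl)
  have hB0 : 0 ≤ C^(s*s) * A := by positivity
  have hk0 : k ≠ 0 := by
    intro h
    rw [h] at hkB
    simp only [hm, pow_zero, mul_zero, mul_one, div_one] at hkB
    have : A ≤ C^(s*s) * A := le_mul_of_one_le_left hA (one_le_pow₀ hC)
    linarith
  have hks' : k ≠ s := by
    intro h
    rw [h] at hkB
    have : m s ≤ C^(s*s) * A := by
      simp only [hm]
      rw [div_le_iff₀ (by positivity)]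
      calc a s * C^(s*s) ≤ A * β^s * C^(s*s) := by gcongr
        _ = _ := by ring
    linarith
  have hmin : ¬ (k - 1 ≤ s ∧ ∀ l ≤ s, m l ≤ m (k-1)) := Nat.find_min hex (by omega)
  push Not at hmin
  obtain ⟨l', hl', hlt⟩ := hmin (by omega)
  have hlt' : m (k-1) < m k := hlt.trans_le (hmax l' hl')
  have hle : m (k+1) ≤ m k := hmax _ (by omega)
  have hkpos : 0 < m k := by linarith
  have hlog : m k ^2 ≤ m (k-1) * m (k+1) := by
    have h := hlc k (by omega) (by omega)
    obtain ⟨q, hq⟩ : ∃ q, k = q + 1 := ⟨k-1, by omega⟩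
    rw [hq] at h ⊢
    simp only [hm, Nat.add_sub_cancel] at h ⊢
    rw [div_mul_div_comm, div_pow, ← pow_mul, ← pow_add,
      show (q+1)*2 = q + (q+1+1) by ring]
    gcongr
    rw [mul_pow, ← pow_mul]
    calc a (q+1)^2 * C^((q+1)*(q+1)*2) ≤ (C * (a q * a (q+1+1))) * C^((q+1)*(q+1)*2) := by gcongr
      _ = (a q * a (q+1+1)) * C^((q+1)*(q+1)*2+1) := by ring
      _ ≤ (a q * a (q+1+1)) * C^((q+1)*(q+1)*2+2) := by
          have := ha q
          have := ha (q+1+1)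
          gcongr
          norm_num
      _ = _ := by ring
  nlinarith [hm0 (k-1), hm0 (k+1)]

lemma gn {n : ℕ} (s : ℕ) (hs1 : 1 ≤ s) : ∃ C : ℝ≥0, ∀ (A β : ℝ≥0) (u : VV n → ℝ),
    1 ≤ β → ContDiff ℝ (⊤:ℕ∞) u → HasCompactSupport u → (∀ x, ‖u x‖ ≤ A) →
    (∀ I : List (Fin (2*n)), I.length = s → eLpNorm (XI n I u) 2 volume ≤ A * β^s) →
    ∀ I : List (Fin (2*n)), I.length ≤ s →
      eLpNorm (XI n I u) (pe s I.length) volume ≤ C * A * β^I.length := by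
  refine ⟨(2*s)^(s*s), fun A β u hβ hu hc hA hI => ?_⟩
  have hfin : ∀ (I : List (Fin (2*n))) p, eLpNorm (XI n I u) p volume ≠ ∞ := fun I p =>
    ((contDiff_XI I hu).continuous.memLp_of_hasCompactSupport
      (hasCompactSupport_XI I hc)).eLpNorm_ne_top
  set N : ℕ → ℝ≥0∞ := fun k => Finset.univ.sup
    (fun I : Fin k → Fin (2*n) => eLpNorm (XI n (List.ofFn I) u) (pe s k) volume) with hN
  have hle : ∀ I : List (Fin (2*n)), eLpNorm (XI n I u) (pe s I.length) volume ≤ N I.length := by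
    intro I
    have := Finset.le_sup (f := fun J : Fin I.length → Fin (2*n) =>
      eLpNorm (XI n (List.ofFn J) u) (pe s I.length) volume) (Finset.mem_univ I.get)
    simpa only [List.ofFn_get] using this
  have hNfin : ∀ k, N k ≠ ∞ := by
    intro k
    refine ne_of_lt ((Finset.sup_lt_iff (by simp)).2 fun I _ => ?_)
    exact lt_top_iff_ne_top.2 (hfin _ _)
  have hup : ∀ k (c : ℝ≥0∞), (∀ I : List (Fin (2*n)), I.length = k →
      eLpNorm (XI n I u) (pe s k) volume ≤ c) → N k ≤ c := by
    intro k c h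
    exact Finset.sup_le fun I _ => h _ (by simp)
  have hsq : ∀ k, 1 ≤ k → k < s → N k ^2 ≤ (2*s : ℝ≥0) * (N (k-1) * N (k+1)) := by
    intro k hk hks
    rcases isEmpty_or_nonempty (Fin k → Fin (2*n)) with he | hne
    · have : N k = 0 := by simp [hN]
      rw [this]; simp
    obtain ⟨I, -, hI⟩ := Finset.exists_mem_eq_sup (Finset.univ) Finset.univ_nonempty
      (fun I : Fin k → Fin (2*n) => eLpNorm (XI n (List.ofFn I) u) (pe s k) volume)
    have hNk : N k = eLpNorm (XI n (List.ofFn I) u) (pe s k) volume := hI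
    rw [hNk]
    have hlen : (List.ofFn I).length = k := by simp
    generalize List.ofFn I = L at hlen ⊢
    match L, hlen with
    | [], h => simp at h; omega
    | j :: J, h =>
      have hJ : J.length = k - 1 := by simp at h; omega
      have := gn_base s k hk hks j (XI n J u) (contDiff_XI J hu) (hasCompactSupport_XI J hc)
      refine this.trans ?_
      gcongr
      · rw [← hJ]; exact hle J
      · have h3 := hle (j :: j :: J)
        have h4 : (j :: j :: J).length = k + 1 := by simp at h ⊢; omega
        rw [h4] at h3
        exact h3
  have hch := chain_aux s (fun k => (N k).toReal) (2*s) A β (fun k => ENNReal.toReal_nonneg)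
    (by have : (1:ℝ) ≤ s := by exact_mod_cast hs1
        linarith) A.2 (by exact_mod_cast hβ) ?_ ?_ ?_
  · intro I hIs
    refine (hle I).trans ?_
    have h1 := hch I.length hIs
    rw [← ENNReal.ofReal_toReal (hNfin I.length)]
    refine (ENNReal.ofReal_le_ofReal h1).trans (le_of_eq ?_)
    rw [show ((2*s:ℝ)^(s*s) * A * β^I.length) = (((2*s)^(s*s) * A * β^I.length : ℝ≥0) : ℝ) by
      push_cast; rfl, ENNReal.ofReal_coe_nnreal]
    push_cast; rfl
  · refine ENNReal.toReal_le_coe_of_le_coe (hup 0 A ?_)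
    intro I hI0
    rw [List.length_eq_zero_iff.1 hI0, pe_zero s hs1, eLpNorm_exponent_top]
    exact eLpNormEssSup_le_of_ae_nnnorm_bound (.of_forall fun x => hA x)
  · have : N s ≤ ((A * β^s : ℝ≥0) : ℝ≥0∞) := by
      refine hup s _ fun I hI' => ?_
      rw [pe_self s hs1]
      simpa using hI I hI'
    simpa using ENNReal.toReal_le_coe_of_le_coe this
  · intro k hk hks
    have := ENNReal.toReal_mono (ENNReal.mul_ne_top ENNReal.coe_ne_top
      (ENNReal.mul_ne_top (hNfin _) (hNfin _))) (hsq k hk hks)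
    simpa using this

def zc (n : ℕ) : Fin (2*n+1) := ⟨2*n, by omega⟩

lemma hDeriv_comm {n : ℕ} (hn : 1 ≤ n) (G : VV n → ℝ) (hG : ContDiff ℝ (⊤:ℕ∞) G) (x : VV n) :
    fderiv ℝ G x (Pi.single (zc n) 1) =
      hDeriv n ⟨n, by omega⟩ (hDeriv n ⟨0, by omega⟩ G) x
      - hDeriv n ⟨0, by omega⟩ (hDeriv n ⟨n, by omega⟩ G) x := by
  have hd : DifferentiableAt ℝ (fderiv ℝ G) x :=
    (hG.fderiv_right (m := (⊤:ℕ∞)) (by simp)).differentiable (by simp) x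
  have key : ∀ i j : Fin (2*n), hDeriv n i (hDeriv n j G) x
      = fderiv ℝ (fderiv ℝ G) x (Xvec n i x) (Xvec n j x)
        + fderiv ℝ G x (fderiv ℝ (Xvec n j) x (Xvec n i x)) := by
    intro i j
    have hj : DifferentiableAt ℝ (Xvec n j) x := (contDiff_Xvec n j).differentiable (by simp) x
    unfold hDeriv
    rw [fderiv_clm_apply hd hj]
    simp [add_comm]
  have hsym : IsSymmSndFDerivAt ℝ G x :=
    hG.contDiffAt.isSymmSndFDerivAt (by simp [minSmoothness_of_isRCLikeNormedField]; exact WithTop.coe_le_coe.2 le_top)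
  rw [key, key, hsym (Xvec n ⟨n, by omega⟩ x)]
  have e1 : Xvec n ⟨n, by omega⟩ = fun _ => Pi.single (⟨n, by omega⟩ : Fin (2*n+1)) (1:ℝ) := by
    funext y; simp [Xvec]
  have e0 : Xvec n ⟨0, by omega⟩ = fun y => (Pi.single (⟨0, by omega⟩ : Fin (2*n+1)) 1 : VV n)
      + y ⟨n, by omega⟩ • (Pi.single (zc n) 1 : VV n) := by
    funext y; simp [Xvec, zc, show 0 < n by omega]
  have d0 : HasFDerivAt (Xvec n ⟨0, by omega⟩)
      ((ContinuousLinearMap.proj (R := ℝ) (φ := fun _ : Fin (2*n+1) => ℝ) (⟨n, by omega⟩ : Fin (2*n+1))).smulRight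
        (Pi.single (zc n) 1 : VV n)) x := by
    rw [e0]
    refine HasFDerivAt.const_add _ ?_
    exact (ContinuousLinearMap.proj (R := ℝ) (φ := fun _ : Fin (2*n+1) => ℝ) (⟨n, by omega⟩ : Fin (2*n+1))).hasFDerivAt.smul_const _
  rw [d0.fderiv, e1]
  simp

lemma enorm_le_lintegral_update {n : ℕ} (h : VV n → ℝ) (hh : ContDiff ℝ 1 h)
    (hc : HasCompactSupport h) (q : VV n) (i : Fin (2*n+1)) :
    ‖h q‖ₑ ≤ ∫⁻ t, ‖fderiv ℝ h (Function.update q i t) (Pi.single i 1)‖ₑ := by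
  calc ‖h q‖ₑ
    _ ≤ ∫⁻ t in Set.Iic (q i), ‖deriv (h ∘ Function.update q i) t‖ₑ := by
        apply le_trans (by simp) (HasCompactSupport.enorm_le_lintegral_Ici_deriv _ _ _)
        · exact hh.comp (by convert! contDiff_update 1 q i)
        · exact hc.comp_isClosedEmbedding (isClosedEmbedding_update q i)
    _ ≤ ∫⁻ t, ‖deriv (h ∘ Function.update q i) t‖ₑ := by
        gcongr
        exact Measure.restrict_le_self
    _ = _ := by
        congr 1; funext y
        rw [fderiv_comp_deriv _ (hh.differentiable one_ne_zero).differentiableAt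
          (hasDerivAt_update q i y).differentiableAt]
        simp [deriv_update]

def shear (n : ℕ) (x0 : VV n) (q : VV n) : VV n :=
  q + (∑ j : Fin n, q ⟨j, by have := j.2; omega⟩ * x0 ⟨n + j, by have := j.2; omega⟩) •
    (Pi.single (zc n) 1 : VV n)

lemma shear_fderiv {n : ℕ} (x0 q : VV n) : HasFDerivAt (shear n x0)
    (ContinuousLinearMap.id ℝ (VV n) + (∑ j : Fin n,
      x0 ⟨n + j, by have := j.2; omega⟩ • (ContinuousLinearMap.proj (R := ℝ) (φ := fun _ : Fin (2*n+1) => ℝ)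
        (⟨j, by have := j.2; omega⟩ : Fin (2*n+1)))).smulRight (Pi.single (zc n) 1 : VV n)) q := by
  unfold shear
  refine (hasFDerivAt_id q).add ?_
  refine HasFDerivAt.smul_const ?_ _
  refine HasFDerivAt.fun_sum fun j _ => ?_
  exact (ContinuousLinearMap.proj (R := ℝ) (φ := fun _ : Fin (2*n+1) => ℝ)
        (⟨j, by have := j.2; omega⟩ : Fin (2*n+1))).hasFDerivAt.mul_const _

lemma shear_contDiff {n : ℕ} (x0 : VV n) : ContDiff ℝ (⊤:ℕ∞) (shear n x0) := by
  unfold shear; fun_prop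

lemma shear_of_ne {n : ℕ} (x0 q : VV n) (i : Fin (2*n+1)) (hi : i ≠ zc n) :
    shear n x0 q i = q i := by
  simp [shear, hi]

lemma shear_update {n : ℕ} (x0 q : VV n) (t : ℝ) :
    shear n x0 (Function.update q (zc n) t) = Function.update q (zc n)
      (t + ∑ j : Fin n, q ⟨j, by have := j.2; omega⟩ * x0 ⟨n + j, by have := j.2; omega⟩) := by
  have : ∀ j : Fin n, (⟨j, by have := j.2; omega⟩ : Fin (2*n+1)) ≠ zc n := by
    intro j h; have := j.2; simp [zc, Fin.ext_iff] at h; omega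
  funext i
  by_cases hi : i = zc n
  · subst hi; simp [shear, this]
  · simp [shear, hi]

lemma shear_inv {n : ℕ} (x0 q : VV n) : 
    q - (∑ j : Fin n, q ⟨j, by have := j.2; omega⟩ * x0 ⟨n + j, by have := j.2; omega⟩) •
    (Pi.single (zc n) 1 : VV n) = 
     Function.update q (zc n)
      (q (zc n) - ∑ j : Fin n, q ⟨j, by have := j.2; omega⟩ * x0 ⟨n + j, by have := j.2; omega⟩) := by
  funext i
  by_cases hi : i = zc n
  · subst hi; simp
  · simp [hi]

lemma shear_compactSupport {n : ℕ} (x0 : VV n) {h : VV n → ℝ} (hc : HasCompactSupport h) :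
    HasCompactSupport (fun q => h (shear n x0 q)) := by
  have hcont : Continuous (fun q : VV n => q - (∑ j : Fin n, q ⟨j, by have := j.2; omega⟩ * x0 ⟨n + j, by have := j.2; omega⟩) •
    (Pi.single (zc n) 1 : VV n)) := by fun_prop
  refine HasCompactSupport.of_support_subset_isCompact (hc.isCompact.image hcont) ?_
  intro q hq
  refine ⟨shear n x0 q, subset_tsupport _ hq, ?_⟩
  have : ∀ j : Fin n, shear n x0 q ⟨j, by have := j.2; omega⟩ = q ⟨j, by have := j.2; omega⟩ := by
    intro j; apply shear_of_ne
    have := j.2; simp [zc, Fin.ext_iff]; omega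
  simp only [this]
  simp [shear]

lemma shear_deriv {n : ℕ} (x0 q : VV n) (h : VV n → ℝ) (hh : ContDiff ℝ (⊤:ℕ∞) h) (k : Fin (2*n))
    (hq : (k:ℕ) < n → ∀ j : Fin n, q ⟨n + j, by have := j.2; omega⟩ = x0 ⟨n + j, by have := j.2; omega⟩) :
    fderiv ℝ (fun q => h (shear n x0 q)) q (Pi.single (⟨k, by have := k.2; omega⟩ : Fin (2*n+1)) 1)
      = hDeriv n k h (shear n x0 q) := by
  have h1 := HasFDerivAt.comp q (diff_of hh (shear n x0 q)).hasFDerivAt (shear_fderiv x0 q)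
  have h2 : (h ∘ shear n x0) = fun q => h (shear n x0 q) := rfl
  rw [h2] at h1
  rw [h1.fderiv]
  unfold hDeriv
  simp only [ContinuousLinearMap.comp_apply]
  congr 1
  have hk := k.2
  unfold Xvec
  split_ifs with hkn
  · rw [shear_of_ne _ _ _ (by simp [zc, Fin.ext_iff]; omega)]
    have := hq hkn ⟨k, hkn⟩
    simp only at this
    rw [this]
    simp [Pi.single_apply, Fin.ext_iff, zc]
    rw [Finset.sum_eq_single ⟨k, hkn⟩]
    · simp
    · intro b _ hb
      rw [if_neg]
      intro h; apply hb; ext; simpa using h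
    · simp
  · simp [Pi.single_apply, Fin.ext_iff, zc]
    refine Finset.sum_eq_zero fun j _ => ?_
    rw [if_neg]
    have := j.2; omega

lemma lmarg_step {n : ℕ} (h : VV n → ℝ) (hh : ContDiff ℝ 1 h)
    (hc : HasCompactSupport h) (S : Finset (Fin (2*n+1))) (i : Fin (2*n+1)) (hi : i ∉ S) (p : VV n) :
    (∫⋯∫⁻_S, (fun q => ‖h q‖ₑ) ∂(fun _ : Fin (2*n+1) => (volume : Measure ℝ))) p
      ≤ (∫⋯∫⁻_(insert i S), (fun q => ‖fderiv ℝ h q (Pi.single i 1)‖ₑ)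
          ∂(fun _ : Fin (2*n+1) => (volume : Measure ℝ))) p := by
  have hm : Measurable (fun q : VV n => ‖fderiv ℝ h q (Pi.single i 1)‖ₑ) := by
    have : Continuous (fun q : VV n => fderiv ℝ h q (Pi.single i 1)) :=
      (hh.continuous_fderiv (by simp)).clm_apply continuous_const
    exact this.enorm.measurable
  rw [lmarginal_insert' _ hm hi]
  exact lmarginal_mono (fun q => enorm_le_lintegral_update h hh hc q i) p

lemma sob_chain {n : ℕ} (u : VV n → ℝ) (hu : ContDiff ℝ (⊤:ℕ∞) u) (hc : HasCompactSupport u) (x0 : VV n) :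
    ∀ k ≤ 2*n, ∃ I : List (Fin (2*n)), I.length = k ∧ ‖u x0‖ₑ ≤
      (∫⋯∫⁻_(Finset.univ.filter fun i : Fin (2*n+1) => (i:ℕ) < k), (fun q => ‖XI n I u (shear n x0 q)‖ₑ)
        ∂(fun _ : Fin (2*n+1) => (volume : Measure ℝ)))
        (Function.update x0 (zc n) (x0 (zc n) - ∑ j : Fin n, x0 ⟨j, by have := j.2; omega⟩ * x0 ⟨n + j, by have := j.2; omega⟩)) := by
  intro k
  induction k with
  | zero =>
    intro _
    refine ⟨[], rfl, ?_⟩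
    simp [XI, shear_update]
  | succ k ih =>
    intro hk
    obtain ⟨I, hI, hle⟩ := ih (by omega)
    refine ⟨⟨k, by omega⟩ :: I, by simp [hI], hle.trans ?_⟩
    have hsm := contDiff_XI I hu
    have hkk : (⟨k, by omega⟩ : Fin (2*n+1)) ∉ (Finset.univ.filter fun i : Fin (2*n+1) => (i:ℕ) < k) := by simp
    have h1 : ContDiff ℝ 1 (fun q => XI n I u (shear n x0 q)) :=
      (hsm.comp (shear_contDiff x0)).of_le (by exact_mod_cast le_top)
    refine (lmarg_step _ h1 (shear_compactSupport x0 (hasCompactSupport_XI I hc)) _ _ hkk _).trans ?_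
    have hset : insert (⟨k, by omega⟩ : Fin (2*n+1)) (Finset.univ.filter fun i : Fin (2*n+1) => (i:ℕ) < k)
        = Finset.univ.filter fun i : Fin (2*n+1) => (i:ℕ) < k+1 := by
      ext i; simp [Fin.ext_iff]; omega
    rw [hset]
    unfold lmarginal
    refine le_of_eq (lintegral_congr fun y => ?_)
    have := shear_deriv x0 (Function.updateFinset (Function.update x0 (zc n) (x0 (zc n) - ∑ j : Fin n, x0 ⟨j, by have := j.2; omega⟩ * x0 ⟨n + j, by have := j.2; omega⟩)) (Finset.univ.filter fun i : Fin (2*n+1) => (i:ℕ) < k+1) y) _ hsm ⟨k, by omega⟩ ?_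
    · exact congrArg _ this
    · intro hkn j
      simp only at hkn
      have hj := j.2
      rw [Function.updateFinset, dif_neg (by simp; omega)]
      rw [Function.update_of_ne]
      simp [zc, Fin.ext_iff]; omega

lemma sob_l1 {n : ℕ} (hn : 1 ≤ n) (u : VV n → ℝ) (hu : ContDiff ℝ (⊤:ℕ∞) u) (hc : HasCompactSupport u) (x0 : VV n) :
    ∃ I J : List (Fin (2*n)), I.length = 2*n+2 ∧ J.length = 2*n+2 ∧
      ‖u x0‖ₑ ≤ eLpNorm (XI n I u) 1 volume + eLpNorm (XI n J u) 1 volume := by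
  obtain ⟨I, hI, hle⟩ := sob_chain u hu hc x0 (2*n) le_rfl
  refine ⟨⟨n, by omega⟩ :: ⟨0, by omega⟩ :: I, ⟨0, by omega⟩ :: ⟨n, by omega⟩ :: I, by simp [hI], by simp [hI], hle.trans ?_⟩
  have hsm := contDiff_XI I hu
  have hkk : zc n ∉ (Finset.univ.filter fun i : Fin (2*n+1) => (i:ℕ) < 2*n) := by simp [zc]
  have h1 : ContDiff ℝ 1 (fun q => XI n I u (shear n x0 q)) :=
    (hsm.comp (shear_contDiff x0)).of_le (by exact_mod_cast le_top)
  refine (lmarg_step _ h1 (shear_compactSupport x0 (hasCompactSupport_XI I hc)) _ _ hkk _).trans ?_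
  set G := XI n I u with hG
  have hd : ∀ q, fderiv ℝ (fun q => G (shear n x0 q)) q (Pi.single (zc n) 1)
      = fderiv ℝ G (shear n x0 q) (Pi.single (zc n) 1) := by
    intro q
    have h1 := HasFDerivAt.comp q (diff_of hsm (shear n x0 q)).hasFDerivAt (shear_fderiv x0 q)
    have h2 : (G ∘ shear n x0) = fun q => G (shear n x0 q) := rfl
    rw [h2] at h1
    rw [h1.fderiv]
    simp only [ContinuousLinearMap.comp_apply]
    congr 1
    simp [Pi.single_apply, Fin.ext_iff, zc]
    refine Finset.sum_eq_zero fun j _ => ?_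
    rw [if_neg]
    have := j.2; omega
  simp only [hd]
  have hcont : Continuous (fun q : VV n => fderiv ℝ G q (Pi.single (zc n) 1)) :=
      (hsm.continuous_fderiv (by simp)).clm_apply continuous_const
  have hset : insert (zc n) (Finset.univ.filter fun i : Fin (2*n+1) => (i:ℕ) < 2*n)
        = Finset.univ := by
    ext i; simp [Fin.ext_iff, zc]; omega
  rw [lmarginal_insert' (fun q => ‖fderiv ℝ G (shear n x0 q) (Pi.single (zc n) 1)‖ₑ) (hcont.comp (shear_contDiff x0).continuous).enorm.measurable hkk]
  have e1 : (fun q : VV n => ∫⁻ t, ‖fderiv ℝ G (shear n x0 (Function.update q (zc n) t)) (Pi.single (zc n) 1)‖ₑ)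
     = (fun q : VV n => ∫⁻ t, ‖fderiv ℝ G (Function.update q (zc n) t) (Pi.single (zc n) 1)‖ₑ) := by
    funext q
    simp only [shear_update]
    exact lintegral_add_right_eq_self (fun t => ‖fderiv ℝ G (Function.update q (zc n) t) (Pi.single (zc n) 1)‖ₑ) _
  rw [e1, ← lmarginal_insert' (fun q => ‖fderiv ℝ G q (Pi.single (zc n) 1)‖ₑ) hcont.enorm.measurable hkk, hset, lmarginal_univ]
  rw [eLpNorm_one_eq_lintegral_enorm, eLpNorm_one_eq_lintegral_enorm, ← lintegral_add_left]
  · refine lintegral_mono fun q => ?_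
    simp only
    rw [hDeriv_comm hn G hsm q]
    exact enorm_sub_le
  · exact (contDiff_XI _ hu).continuous.enorm.measurable

lemma sob {n : ℕ} (hn : 1 ≤ n) {D : Set (VV n)} (hDb : IsBounded D) :
    ∃ C : ℝ≥0, ∀ (B : ℝ≥0) (u : VV n → ℝ), ContDiff ℝ (⊤:ℕ∞) u → HasCompactSupport u → tsupport u ⊆ D →
      (∀ I : List (Fin (2*n)), I.length = 2*n+2 → eLpNorm (XI n I u) 2 volume ≤ B) →
      ∀ x, ‖u x‖ ≤ C * B := by
  have hfin : volume D ≠ ∞ := hDb.measure_lt_top.ne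
  set M : ℝ≥0∞ := (volume D)^(1/2:ℝ) with hM
  have hMfin : M ≠ ∞ := by rw [hM]; finiteness
  refine ⟨2 * M.toNNReal, fun B u hu hc hs hI x => ?_⟩
  obtain ⟨I, J, hIl, hJl, hle⟩ := sob_l1 hn u hu hc x
  have key : ∀ I : List (Fin (2*n)), I.length = 2*n+2 → eLpNorm (XI n I u) 1 volume ≤ M * B := by
    intro I hl
    have hsub : Function.support (XI n I u) ⊆ D :=
      (subset_tsupport _).trans ((tsupport_XI I).trans hs)
    rw [← eLpNorm_restrict_eq_of_support_subset hsub]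
    refine (eLpNorm_le_eLpNorm_mul_rpow_measure_univ (p := 1) (q := 2) (by norm_num)
      (contDiff_XI I hu).continuous.aestronglyMeasurable).trans ?_
    rw [eLpNorm_restrict_eq_of_support_subset hsub, mul_comm]
    gcongr
    · rw [hM]; simp; norm_num
    · exact hI I hl
  have := hle.trans (add_le_add (key I hIl) (key J hJl))
  have h2 : ‖u x‖ₑ ≤ ((2 * M.toNNReal * B : ℝ≥0) : ℝ≥0∞) := by
    refine this.trans ?_
    push_cast
    rw [ENNReal.coe_toNNReal hMfin, mul_assoc, two_mul]
  have h3 : ‖u x‖₊ ≤ 2 * M.toNNReal * B := by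
    rw [enorm_eq_nnnorm] at h2; exact_mod_cast h2
  exact_mod_cast h3

lemma bdd_aux {n : ℕ} {D : Set (VV n)} (hD : IsOpen D) (g : VV n → E)
    (hg : ContDiffOn ℝ (⊤:ℕ∞) g (closure D)) (I : List (Fin (2*n))) :
    ∀ x ∈ closure D, ∀ m : ℕ, ∃ V ∈ nhds x, ∃ G : VV n → E,
      ContDiffWithinAt ℝ m G (closure D) x ∧ ∀ y ∈ V, y ∈ D → XI n I g y = G y := by
  induction I with
  | nil =>
    intro x hx m
    exact ⟨Set.univ, Filter.univ_mem, g, (hg x hx).of_le (by exact_mod_cast le_top), fun _ _ _ => rfl⟩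
  | cons j I ih =>
    intro x hx m
    obtain ⟨V, hV, G, hG, he⟩ := ih x hx (m+1)
    have hG' : ContDiffWithinAt ℝ ((m:WithTop ℕ∞)+1) G (closure D) x := by exact_mod_cast hG
    rw [contDiffWithinAt_succ_iff_hasFDerivWithinAt' (by simp)] at hG'
    obtain ⟨u, hu, hus, -, G', hG1, hG2⟩ := hG'
    rw [Set.insert_eq_of_mem hx] at hu hus
    obtain ⟨W, hW, hWu⟩ := mem_nhdsWithin_iff_exists_mem_nhds_inter.1 hu
    refine ⟨interior V ∩ W, Filter.inter_mem (interior_mem_nhds.2 hV) hW,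
      fun y => G' y (Xvec n j y), ?_, ?_⟩
    · exact hG2.clm_apply ((contDiff_Xvec n j).contDiffAt.contDiffWithinAt.of_le
        (by exact_mod_cast le_top))
    · rintro y ⟨hy1, hy2⟩ hyD
      have h1 : HasFDerivAt G (G' y) y :=
        (hG1 y (hWu ⟨hy2, subset_closure hyD⟩)).hasFDerivAt
          (Filter.mem_of_superset (hD.mem_nhds hyD) subset_closure)
      have h2 : XI n I g =ᶠ[nhds y] G := by
        filter_upwards [isOpen_interior.mem_nhds hy1, hD.mem_nhds hyD] with z hz1 hz2
        exact he z (interior_subset hz1) hz2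
      simp only [XI, hDeriv]
      rw [h2.fderiv_eq, h1.fderiv]

lemma XI_bdd {n : ℕ} {D : Set (VV n)} (hD : IsOpen D) (hDb : IsBounded D) (g : VV n → E)
    (hg : ContDiffOn ℝ (⊤:ℕ∞) g (closure D)) (I : List (Fin (2*n))) :
    ∃ C : ℝ, ∀ x ∈ D, ‖XI n I g x‖ ≤ C := by
  have hK : IsCompact (closure D) := hDb.isCompact_closure
  suffices H : ∃ C : ℝ, ∀ x ∈ closure D, x ∈ D → ‖XI n I g x‖ ≤ C by
    obtain ⟨C, hC⟩ := H
    exact ⟨C, fun x hx => hC x (subset_closure hx) hx⟩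
  refine hK.induction_on (p := fun S => ∃ C : ℝ, ∀ x ∈ S, x ∈ D → ‖XI n I g x‖ ≤ C) ?_ ?_ ?_ ?_
  · exact ⟨0, by simp⟩
  · rintro S T hST ⟨C, hC⟩
    exact ⟨C, fun x hx => hC x (hST hx)⟩
  · rintro S T ⟨C, hC⟩ ⟨C', hC'⟩
    refine ⟨max C C', ?_⟩
    rintro x (hx | hx) hxD
    · exact (hC x hx hxD).trans (le_max_left _ _)
    · exact (hC' x hx hxD).trans (le_max_right _ _)
  · intro x hx
    obtain ⟨V, hV, G, hG, he⟩ := bdd_aux hD g hg I x hx 0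
    have hc : ContinuousWithinAt G (closure D) x := hG.continuousWithinAt
    have h1 : ∀ᶠ y in nhdsWithin x (closure D), ‖G y‖ < ‖G x‖ + 1 :=
      hc.norm.eventually_lt continuousWithinAt_const (by linarith)
    refine ⟨{y | ‖G y‖ < ‖G x‖ + 1} ∩ V, Filter.inter_mem h1 (mem_nhdsWithin_of_mem_nhds hV), ‖G x‖ + 1, ?_⟩
    rintro y ⟨hy1, hy2⟩ hyD
    rw [he y hy2 hyD]
    exact le_of_lt hy1

lemma XI_aesm {n : ℕ} [SecondCountableTopologyEither (VV n) E] {D : Set (VV n)} (hD : IsOpen D)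
    (g : VV n → E)
    (hg : ContDiffOn ℝ (⊤:ℕ∞) g D) (I : List (Fin (2*n))) :
    AEStronglyMeasurable (XI n I g) (volume.restrict D) :=
  (contDiffOn_XI I hD hg).continuousOn.aestronglyMeasurable hD.measurableSet

lemma XI_memLp {n : ℕ} {D : Set (VV n)} (hD : IsOpen D) (hDb : IsBounded D) (g : VV n → E)
    (hg : ContDiffOn ℝ (⊤:ℕ∞) g (closure D)) (I : List (Fin (2*n))) :
    MemLp (XI n I g) 2 (volume.restrict D) := by
  obtain ⟨C, hC⟩ := XI_bdd hD hDb g hg I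
  have : IsFiniteMeasure (volume.restrict D) := ⟨by simpa using hDb.measure_lt_top⟩
  refine MemLp.of_bound (XI_aesm hD g (hg.mono subset_closure) I) C ?_
  filter_upwards [ae_restrict_mem hD.measurableSet] with x hx using hC x hx

lemma eLp2_eq {α : Type*} [MeasurableSpace α] {μ : Measure α} {h : α → E} (hh : MemLp h 2 μ) :
    eLpNorm h 2 μ = ENNReal.ofReal (Real.sqrt (∫ x, ‖h x‖^2 ∂μ)) := by
  rw [hh.eLpNorm_eq_integral_rpow_norm (by norm_num) (by norm_num)]
  congr 1
  rw [Real.sqrt_eq_rpow]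
  simp

lemma fsNorm_nonneg {n : ℕ} (D : Set (VV n)) (s : ℕ) (g : VV n → E) : 0 ≤ fsNorm n D s g :=
  Real.sqrt_nonneg _

lemma fs_der {n s : ℕ} {D : Set (VV n)} (hD : IsOpen D) (hDb : IsBounded D) (g : VV n → E)
    (hg : ContDiffOn ℝ (⊤:ℕ∞) g (closure D)) (I : List (Fin (2*n))) (hI : I.length ≤ s) :
    eLpNorm (XI n I g) 2 (volume.restrict D) ≤ ENNReal.ofReal (fsNorm n D s g) := by
  rw [eLp2_eq (XI_memLp hD hDb g hg I)]
  refine ENNReal.ofReal_le_ofReal (Real.sqrt_le_sqrt ?_)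
  unfold fsNormSq
  have hnn : ∀ t (J : Fin t → Fin (2*n)), 0 ≤ ∫ x in D, ‖XI n (List.ofFn J) g x‖^2 := fun t J =>
    integral_nonneg fun x => by positivity
  have h1 := Finset.single_le_sum (f := fun t => ∑ J : Fin t → Fin (2*n),
    ∫ x in D, ‖XI n (List.ofFn J) g x‖^2) (s := Finset.range (s+1))
    (fun t _ => Finset.sum_nonneg fun J _ => hnn t J) (Finset.mem_range.2 (by omega : I.length < s+1))
  refine le_trans ?_ h1
  have h2 := Finset.single_le_sum (f := fun J : Fin I.length → Fin (2*n) =>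
    ∫ x in D, ‖XI n (List.ofFn J) g x‖^2) (s := Finset.univ)
    (fun J _ => hnn _ J) (Finset.mem_univ I.get)
  refine le_trans ?_ h2
  simp only [List.ofFn_get]
  exact le_rfl

lemma fs_upper (n s : ℕ) : ∃ N : ℝ, 0 ≤ N ∧ ∀ (D : Set (VV n)) (h : VV n → E) (B : ℝ), 0 ≤ B →
    (∀ I : List (Fin (2*n)), I.length ≤ s → AEStronglyMeasurable (XI n I h) (volume.restrict D)) →
    (∀ I : List (Fin (2*n)), I.length ≤ s → eLpNorm (XI n I h) 2 (volume.restrict D) ≤ ENNReal.ofReal B) →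
    fsNorm n D s h ≤ N * B := by
  refine ⟨Real.sqrt (∑ t ∈ Finset.range (s+1), ∑ I : Fin t → Fin (2*n), (1:ℝ)), Real.sqrt_nonneg _, ?_⟩
  intro D h B hB hm hI
  unfold fsNorm
  rw [← Real.sqrt_sq hB, ← Real.sqrt_mul (by positivity)]
  refine Real.sqrt_le_sqrt ?_
  unfold fsNormSq
  rw [Finset.sum_mul]
  refine Finset.sum_le_sum fun t ht => ?_
  rw [Finset.sum_mul]
  refine Finset.sum_le_sum fun J _ => ?_
  have hl : (List.ofFn J).length ≤ s := by
    rw [List.length_ofFn]; have := Finset.mem_range.1 ht; omega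
  have h1 := hI _ hl
  rw [eLp2_eq ⟨hm _ hl, h1.trans_lt ENNReal.ofReal_lt_top⟩, ENNReal.ofReal_le_ofReal_iff hB,
    Real.sqrt_le_left hB] at h1
  rw [one_mul]
  exact h1

lemma cutoff {n : ℕ} {D : Set (VV n)} (hD : IsOpen D) (I : List (Fin (2*n))) :
    ∀ φ : VV n → ℝ, ContDiff ℝ (⊤:ℕ∞) φ → HasCompactSupport φ →
    ∃ C : ℝ≥0, ∀ (B : ℝ≥0∞) (g : VV n → ℝ), ContDiffOn ℝ (⊤:ℕ∞) g D →
      (∀ J : List (Fin (2*n)), J.length ≤ I.length → eLpNorm (XI n J g) 2 (volume.restrict D) ≤ B) →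
      eLpNorm (XI n I (fun x => φ x * g x)) 2 (volume.restrict D) ≤ C * B := by
  induction I using List.reverseRecOn with
  | nil =>
    intro φ hφ hc
    obtain ⟨C, hC⟩ := hc.exists_bound_of_continuous hφ.continuous
    refine ⟨C.toNNReal, fun B g hg hB => ?_⟩
    refine le_trans ?_ (mul_le_mul_right (hB [] le_rfl) _)
    refine (eLpNorm_le_nnreal_smul_eLpNorm_of_ae_le_mul (c := C.toNNReal) (Filter.Eventually.of_forall fun x => ?_) 2).trans le_rfl
    simp only [XI, nnnorm_mul]
    gcongr
    rw [← NNReal.coe_le_coe]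
    simpa using Or.inl (hC x)
  | append_singleton I j ih =>
    intro φ hφ hc
    obtain ⟨C1, h1⟩ := ih (hDeriv n j φ) (contDiff_hDeriv j hφ) (hasCompactSupport_XI [j] hc)
    obtain ⟨C2, h2⟩ := ih φ hφ hc
    refine ⟨C1 + C2, fun B g hg hB => ?_⟩
    have hg1 : ContDiffOn ℝ (⊤:ℕ∞) (hDeriv n j g) D := contDiffOn_hDeriv j hD hg
    have s1 : ContDiffOn ℝ (⊤:ℕ∞) (fun x => hDeriv n j φ x * g x) D := (contDiff_hDeriv j hφ).contDiffOn.mul hg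
    have s2 : ContDiffOn ℝ (⊤:ℕ∞) (fun x => φ x * hDeriv n j g x) D := hφ.contDiffOn.mul hg1
    have e : ∀ x ∈ D, XI n (I ++ [j]) (fun x => φ x * g x) x =
        XI n I (fun x => hDeriv n j φ x * g x) x + XI n I (fun x => φ x * hDeriv n j g x) x := by
      intro x hx
      rw [XI_append, ← XI_add I hD s1 s2 x hx]
      refine XI_congr I hD (fun y hy => ?_) x hx
      simp only [XI, hDeriv]
      rw [fderiv_fun_mul (diff_of hφ y) (diffAt_of_on hD hg hy)]
      simp [add_comm, mul_comm]
    have e' : XI n (I ++ [j]) (fun x => φ x * g x) =ᵐ[volume.restrict D]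
        (XI n I (fun x => hDeriv n j φ x * g x) + XI n I (fun x => φ x * hDeriv n j g x)) := by
      filter_upwards [ae_restrict_mem hD.measurableSet] with x hx using e x hx
    rw [eLpNorm_congr_ae e']
    refine (eLpNorm_add_le (XI_aesm hD _ s1 I) (XI_aesm hD _ s2 I) (by norm_num)).trans ?_
    push_cast
    rw [add_mul]
    refine add_le_add (h1 B g hg fun J hJ => hB J (by simp; omega)) (h2 B _ hg1 fun J hJ => ?_)
    have := hB (J ++ [j]) (by simp; omega)
    rw [XI_append] at this
    exact this

lemma contDiff_cut {X : Type*} [NormedAddCommGroup X] [NormedSpace ℝ X] {U : Set X} (hU : IsOpen U)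
    (χ : X → ℝ) (hχ : ContDiff ℝ (⊤:ℕ∞) χ) (h0 : ∀ x, x ∉ U → ∀ᶠ y in nhds x, χ y = 0)
    (h : X → E) (hh : ContDiffOn ℝ (⊤:ℕ∞) h U) : ContDiff ℝ (⊤:ℕ∞) (fun x => χ x • h x) := by
  rw [contDiff_iff_contDiffAt]
  intro x
  by_cases hx : x ∈ U
  · exact hχ.contDiffAt.smul (hh.contDiffAt (hU.mem_nhds hx))
  · refine (contDiffAt_const (c := (0:E))).congr_of_eventuallyEq ?_
    filter_upwards [h0 x hx] with y hy
    simp [hy]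

lemma exists_cut {n : ℕ} {D D' : Set (VV n)} (hD : IsOpen D) (hDb : IsBounded D) (hsub : closure D' ⊆ D) :
    ∃ χ : VV n → ℝ, ContDiff ℝ (⊤:ℕ∞) χ ∧ HasCompactSupport χ ∧ tsupport χ ⊆ D ∧
      (∀ x, χ x ∈ Set.Icc (0:ℝ) 1) ∧ ∀ x ∈ D', χ x = 1 := by
  have hb' : IsBounded (closure D') := hDb.subset hsub
  have hK : IsCompact (closure D') := Metric.isCompact_of_isClosed_isBounded isClosed_closure hb'
  obtain ⟨L, hL, hKL, hLD⟩ := exists_compact_between hK hD hsub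
  obtain ⟨χ, h1, h2, h3⟩ := exists_contMDiffMap_one_nhds_of_subset_interior
    (modelWithCornersSelf ℝ (VV n)) (n := (⊤:ℕ∞)) isClosed_closure hKL
  have hs : Function.support χ ⊆ L := by
    intro x hx
    by_contra h
    exact hx (h2 x h)
  have hts : tsupport χ ⊆ L := closure_minimal hs hL.isClosed
  refine ⟨χ, χ.contMDiff.contDiff, HasCompactSupport.of_support_subset_isCompact hL hs,
    hts.trans hLD, h3, fun x hx => h1.self_of_nhdsSet x (subset_closure hx)⟩

lemma unif_const {n s : ℕ} (p : List (Fin (2*n)) → ℝ≥0 → Prop)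
    (hp : ∀ I, I.length ≤ s → ∃ C, p I C) (hmono : ∀ I C C', C ≤ C' → p I C → p I C') :
    ∃ C, ∀ I, I.length ≤ s → p I C := by
  have hfin : {l : List (Fin (2*n)) | l.length ≤ s}.Finite := List.finite_length_le _ _
  choose! c hc using hp
  refine ⟨hfin.toFinset.sup c, fun I hI => hmono I _ _ ?_ (hc I hI)⟩
  exact Finset.le_sup (f := c) (hfin.mem_toFinset.2 hI)

lemma cutS {n s : ℕ} {D : Set (VV n)} (hD : IsOpen D) (hDb : IsBounded D)
    (χ : VV n → ℝ) (hχ : ContDiff ℝ (⊤:ℕ∞) χ) (hχc : HasCompactSupport χ) (hχD : tsupport χ ⊆ D) (m : ℕ) :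
    ∃ C : ℝ≥0, ∀ (g : VV n → Fin m → ℝ), ContDiffOn ℝ (⊤:ℕ∞) g (closure D) →
      ∀ i, ∀ I : List (Fin (2*n)), I.length ≤ s →
      eLpNorm (XI n I (fun x => χ x * g x i)) 2 volume ≤ C * (fsNorm n D s g).toNNReal := by
  obtain ⟨C, hC⟩ := unif_const (n := n) (s := s) (fun I C => ∀ (B : ℝ≥0∞) (g : VV n → ℝ), ContDiffOn ℝ (⊤:ℕ∞) g D →
      (∀ J : List (Fin (2*n)), J.length ≤ I.length → eLpNorm (XI n J g) 2 (volume.restrict D) ≤ B) →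
      eLpNorm (XI n I (fun x => χ x * g x)) 2 (volume.restrict D) ≤ C * B)
    (fun I _ => cutoff hD I χ hχ hχc)
    (fun I C C' hCC h B g hg hB => (h B g hg hB).trans (by gcongr))
  refine ⟨C, fun g hg i I hI => ?_⟩
  have hsub : Function.support (XI n I (fun x => χ x * g x i)) ⊆ D := by
    refine (subset_tsupport _).trans ((tsupport_XI I).trans (subset_trans ?_ hχD))
    exact tsupport_mul_subset_left
  rw [← eLpNorm_restrict_eq_of_support_subset hsub]
  have hgD := hg.mono subset_closure
  refine hC I hI _ (fun x => g x i) (by fun_prop) fun J hJ => ?_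
  refine le_trans (eLpNorm_mono_ae ?_) (fs_der hD hDb g hg J (hJ.trans hI))
  filter_upwards [ae_restrict_mem hD.measurableSet] with x hx
  rw [← XI_apply J hD hgD i x hx]
  exact norm_le_pi_norm _ i

lemma mk_PHyp {n m s : ℕ} (hn : 1 ≤ n) (hs : 2*n+2 ≤ s) {D D' : Set (VV n)} (hD : IsOpen D) (hDb : IsBounded D)
    (χ : VV n → ℝ) (hχ : ContDiff ℝ (⊤:ℕ∞) χ) (hχc : HasCompactSupport χ) (hχD : tsupport χ ⊆ D)
    (hχ1 : ∀ x, χ x ∈ Set.Icc (0:ℝ) 1)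
    (f : VV n → Fin m → ℝ) (hf : ContDiffOn ℝ (⊤:ℕ∞) f (closure D)) (c : ℝ) :
    ∃ A : ℝ≥0, ∀ g : VV n → Fin m → ℝ, ContDiffOn ℝ (⊤:ℕ∞) g (closure D) →
        (∀ x ∈ D, ‖g x - f x‖ ≤ c) →
      PHyp n m s D' A ((1 + (fsNorm n D s f).toNNReal + (fsNorm n D s g).toNNReal)^(1/(s:ℝ)))
        (fsNorm n D s (fun x => f x - g x)).toNNReal (fun x => χ x • f x) (fun x => χ x • g x) := by
  obtain ⟨Cc, hCc⟩ := cutS (s := s) hD hDb χ hχ hχc hχD m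
  obtain ⟨Cg, hCg⟩ := gn (n := n) s (by omega)
  obtain ⟨Cs, hCs⟩ := sob hn hDb
  obtain ⟨M, hM⟩ := XI_bdd hD hDb f hf []
  simp only [XI] at hM
  set A0 : ℝ≥0 := M.toNNReal + c.toNNReal + Cc with hA0
  set A1 : ℝ≥0 := Cs * Cc + Cc with hA1
  refine ⟨A0 + Cg * A0 + A1 + Cg * A1, fun g hg hgc => ?_⟩
  set nf := (fsNorm n D s f).toNNReal
  set ng := (fsNorm n D s g).toNNReal
  set W := (fsNorm n D s (fun x => f x - g x)).toNNReal
  set β : ℝ≥0 := (1 + nf + ng)^(1/(s:ℝ)) with hβ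
  have hβ1 : 1 ≤ β := NNReal.one_le_rpow (by rw [add_assoc]; exact le_self_add) (by positivity)
  have hβs : β^s = 1 + nf + ng := by
    rw [hβ, ← NNReal.rpow_natCast, ← NNReal.rpow_mul, one_div, inv_mul_cancel₀ (by norm_cast; omega),
      NNReal.rpow_one]
  have h0 : ∀ x, x ∉ D → ∀ᶠ y in nhds x, χ y = 0 := by
    intro x hx
    have : x ∉ tsupport χ := fun h => hx (hχD h)
    rw [notMem_tsupport_iff_eventuallyEq] at this
    exact this
  have hsm : ∀ h : VV n → Fin m → ℝ, ContDiffOn ℝ (⊤:ℕ∞) h (closure D) →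
      ContDiff ℝ (⊤:ℕ∞) (fun x => χ x • h x) := fun h hh =>
    contDiff_cut hD χ hχ h0 h (hh.mono subset_closure)
  have hsmi : ∀ h : VV n → Fin m → ℝ, ContDiffOn ℝ (⊤:ℕ∞) h (closure D) → ∀ i,
      ContDiff ℝ (⊤:ℕ∞) (fun x => χ x * h x i) := fun h hh i =>
    (contDiff_pi.1 (hsm h hh) i)
  have hcs : ∀ h : VV n → ℝ, HasCompactSupport (fun x => χ x * h x) := fun h => hχc.mul_right
  have hbd : ∀ h : VV n → Fin m → ℝ, (∀ x ∈ D, ‖h x‖ ≤ (M.toNNReal + c.toNNReal : ℝ≥0)) →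
      ∀ x, ‖χ x • h x‖ ≤ A0 := by
    intro h hh x
    by_cases hx : x ∈ D
    · rw [norm_smul]
      have h1 : ‖χ x‖ ≤ 1 := by rw [Real.norm_of_nonneg (hχ1 x).1]; exact (hχ1 x).2
      calc ‖χ x‖ * ‖h x‖ ≤ 1 * (M.toNNReal + c.toNNReal : ℝ≥0) := by
            gcongr; exact hh x hx
        _ ≤ A0 := by rw [one_mul]; exact_mod_cast le_self_add
    · rw [(h0 x hx).self_of_nhds]; simp
  have hfb := hbd f (fun x hx => (hM x hx).trans (by
    push_cast
    have := Real.le_coe_toNNReal M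
    have := NNReal.coe_nonneg c.toNNReal
    linarith))
  have hgb := hbd g (fun x hx => by
    push_cast
    have h1 := Real.le_coe_toNNReal M
    have h2 := Real.le_coe_toNNReal c
    have h3 := hM x hx
    have h4 := hgc x hx
    have h5 : ‖g x‖ ≤ ‖f x‖ + ‖g x - f x‖ := by
      simpa using norm_add_le (f x) (g x - f x)
    linarith)
  have hder : ∀ h : VV n → Fin m → ℝ, ContDiffOn ℝ (⊤:ℕ∞) h (closure D) → ∀ i, ∀ (A : ℝ≥0),
      (∀ x, ‖χ x * h x i‖ ≤ A) → (Cc * (fsNorm n D s h).toNNReal ≤ A * β^s) → 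
      ∀ I : List (Fin (2*n)), I.length ≤ s →
      eLpNorm (XI n I (fun x => χ x * h x i)) (pe s I.length) (volume.restrict D') ≤ Cg * A * β^I.length := by
    intro h hh i A hA hA2 I hI
    refine (eLpNorm_mono_measure _ Measure.restrict_le_self).trans ?_
    refine hCg A β _ hβ1 (hsmi h hh i) (hcs _) hA (fun J hJ => ?_) I hI
    refine (hCc h hh i J hJ.le).trans ?_
    exact_mod_cast hA2
  have hw : ContDiffOn ℝ (⊤:ℕ∞) (fun x => f x - g x) (closure D) := hf.sub hg
  have hwb : ∀ i x, ‖χ x * (f x - g x) i‖ ≤ (Cs * (Cc * W) : ℝ≥0) := by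
    intro i x
    have := hCs (Cc * W) _ (hsmi _ hw i) (hcs _) (tsupport_mul_subset_left.trans hχD)
      (fun I hI => by have := hCc _ hw i I (by omega); exact_mod_cast this) x
    exact_mod_cast this
  have hle1 : Cg * A0 ≤ A0 + Cg * A0 + A1 + Cg * A1 := by
    rw [add_assoc, add_assoc, add_left_comm]; exact le_self_add
  have hle2 : Cg * A1 ≤ A0 + Cg * A0 + A1 + Cg * A1 := le_add_self
  have hle3 : A0 ≤ A0 + Cg * A0 + A1 + Cg * A1 := by
    rw [add_assoc, add_assoc]; exact le_self_add
  have hle4 : A1 ≤ A0 + Cg * A0 + A1 + Cg * A1 := by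
    rw [add_right_comm]; exact le_add_self
  have hCA : Cc ≤ A0 := le_add_self
  refine ⟨hsm f hf, hsm g hg, hβ1, fun x _ => (hfb x).trans (by exact_mod_cast hle3),
    fun x _ => (hgb x).trans (by exact_mod_cast hle3), ?_, ?_, ?_, ?_⟩
  · intro x _
    rw [← smul_sub]
    rw [pi_norm_le_iff_of_nonneg (by positivity)]
    intro i
    refine (hwb i x).trans ?_
    rw [← NNReal.coe_mul, NNReal.coe_le_coe, ← mul_assoc]
    gcongr
    exact le_self_add.trans hle4
  · intro I i hI
    refine (hder f hf i A0 (fun x => (norm_le_pi_norm _ i).trans (hfb x)) ?_ I hI).trans ?_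
    · rw [hβs]
      gcongr
      exact le_add_self.trans le_self_add
    · gcongr
      exact_mod_cast hle1
  · intro I i hI
    refine (hder g hg i A0 (fun x => (norm_le_pi_norm _ i).trans (hgb x)) ?_ I hI).trans ?_
    · rw [hβs]
      gcongr
      exact le_add_self
    · gcongr
      exact_mod_cast hle1
  · intro I i hI
    have e : (fun x => XI n I (fun y => (χ y • f y) i) x - XI n I (fun y => (χ y • g y) i) x)
        = XI n I (fun x => χ x * (f x - g x) i) := by
      funext x
      refine (XI_sub I isOpen_univ (hsmi f hf i).contDiffOn (hsmi g hg i).contDiffOn x (Set.mem_univ x)).symm.trans ?_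
      congr 1
      funext y
      simp [mul_sub]
    rw [e]
    refine (hder _ hw i (A1 * W) (fun x => (hwb i x).trans ?_) ?_ I hI).trans ?_
    · rw [NNReal.coe_le_coe, ← mul_assoc]
      gcongr
      exact le_self_add
    · rw [mul_assoc]
      gcongr
      · exact le_add_self
      · exact le_mul_of_one_le_right (by positivity) (one_le_pow₀ hβ1)
    · push_cast
      rw [← mul_assoc]
      gcongr
      exact_mod_cast hle2

lemma sum_lower (s : ℕ) (hs : 1 ≤ s) (R a b : ℝ) (hR : 0 ≤ R) (ha : 0 ≤ a) (hb : 0 ≤ b) :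
    R * (1 + a + b) ≤ ∑ i : Fin (s+1), ∑ j : Fin (s+1), R * a^(i:ℕ) * b^(j:ℕ) := by
  have h1 : ∀ x : ℝ, 0 ≤ x → 1 + x ≤ ∑ i : Fin (s+1), x^(i:ℕ) := by
    intro x hx
    rw [Fin.sum_univ_eq_sum_range (fun i => x^i)]
    have : ∑ i ∈ Finset.range 2, x^i ≤ ∑ i ∈ Finset.range (s+1), x^i :=
      Finset.sum_le_sum_of_subset_of_nonneg (Finset.range_mono (by omega)) (fun i _ _ => by positivity)
    simpa [Finset.sum_range_succ] using this
  have e : ∑ i : Fin (s+1), ∑ j : Fin (s+1), R * a^(i:ℕ) * b^(j:ℕ)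
      = R * ((∑ i : Fin (s+1), a^(i:ℕ)) * ∑ j : Fin (s+1), b^(j:ℕ)) := by
    rw [Finset.sum_mul_sum, Finset.mul_sum]
    refine Finset.sum_congr rfl fun i _ => ?_
    rw [Finset.mul_sum]
    exact Finset.sum_congr rfl fun j _ => by ring
  rw [e]
  gcongr
  have := mul_le_mul (h1 a ha) (h1 b hb) (by positivity) (by linarith [h1 a ha])
  nlinarith [mul_nonneg ha hb]

/-- nonlinear composition estimate (Palais' Axiom B5): there is a
polynomial `Q` of bidegree `≤ s` with nonnegative coefficients such that
`‖F(·,f(·)) − F(·,g(·))‖_{D′,s} ≤ ‖f−g‖_{D,s} Q(‖f‖_{D,s}, ‖g‖_{D,s})` whenever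
`sup_D |g − f| ≤ c`. -/
theorem statement15 (n m₁ m₂ s : ℕ) (hn : 1 ≤ n) (hs : 2*n+4 ≤ s)
    (D D' : Set (Fin (2*n+1) → ℝ)) (hD : IsOpen D) (hDb : IsBounded D)
    (hD' : IsOpen D') (hD'b : IsBounded D') (hsub : closure D' ⊆ D)
    (F : (Fin (2*n+1) → ℝ) → (Fin m₁ → ℝ) → (Fin m₂ → ℝ))
    (hF : ContDiffOn ℝ (⊤:ℕ∞)
      (fun p : (Fin (2*n+1) → ℝ) × (Fin m₁ → ℝ) => F p.1 p.2)
      ((closure D) ×ˢ (Set.univ : Set (Fin m₁ → ℝ))))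
    (f : (Fin (2*n+1) → ℝ) → (Fin m₁ → ℝ)) (hf : ContDiffOn ℝ (⊤:ℕ∞) f (closure D))
    (c : ℝ) (hc : 0 < c) :
    ∃ Q : Fin (s+1) → Fin (s+1) → ℝ, (∀ i j, 0 ≤ Q i j) ∧
      ∀ g : (Fin (2*n+1) → ℝ) → (Fin m₁ → ℝ), ContDiffOn ℝ (⊤:ℕ∞) g (closure D) →
        (∀ x ∈ D, ‖g x - f x‖ ≤ c) →
        fsNorm n D' s (fun x => F x (f x) - F x (g x)) ≤
          fsNorm n D s (fun x => f x - g x) *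
            ∑ i : Fin (s+1), ∑ j : Fin (s+1),
              Q i j * (fsNorm n D s f)^(i:ℕ) * (fsNorm n D s g)^(j:ℕ) := by
  classical
  obtain ⟨χ, hχ, hχc, hχD, hχ1, hχD'⟩ := exists_cut hD hDb hsub
  obtain ⟨A, hA⟩ := mk_PHyp (D' := D') (s := s) hn (by omega) hD hDb χ hχ hχc hχD hχ1 f hf c
  obtain ⟨N, hN0, hN⟩ := fs_upper (E := Fin m₂ → ℝ) n s
  have hDD : D' ⊆ D := subset_closure.trans hsub
  have h0 : ∀ x, x ∉ D → ∀ᶠ y in nhds x, χ y = 0 := by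
    intro x hx
    have : x ∉ tsupport χ := fun h => hx (hχD h)
    rw [notMem_tsupport_iff_eventuallyEq] at this
    exact this
  have hΦ : ∀ i, ContDiff ℝ (⊤:ℕ∞) (fun p : VV n × (Fin m₁ → ℝ) => χ p.1 * F p.1 p.2 i) := by
    intro i
    have h1 := contDiff_cut (U := D ×ˢ (Set.univ : Set (Fin m₁ → ℝ))) (hD.prod isOpen_univ)
      (fun p : VV n × (Fin m₁ → ℝ) => χ p.1) (hχ.comp contDiff_fst) ?_
      (fun p : VV n × (Fin m₁ → ℝ) => F p.1 p.2)
      (hF.mono (Set.prod_mono subset_closure subset_rfl))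
    · exact contDiff_pi.1 h1 i
    · rintro ⟨x, y⟩ hx
      have hx' : x ∉ D := fun h => hx ⟨h, trivial⟩
      exact (continuous_fst.tendsto (x, y)).eventually (h0 x hx')
  have hfinm : IsFiniteMeasure (volume.restrict D') := ⟨by simpa using hD'b.measure_lt_top⟩
  have key : ∃ K : ℝ≥0, ∀ I : List (Fin (2*n)), I.length ≤ s → ∀ i,
      ∀ (β W : ℝ≥0) (u v : VV n → Fin m₁ → ℝ), PHyp n m₁ s D' A β W u v →
      eLpNorm (fun x => XI n I (fun y => χ y * F y (u y) i) x - XI n I (fun y => χ y * F y (v y) i) x) 2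
        (volume.restrict D') ≤ K * W * β^s := by
    refine unif_const (n := n) (s := s) (fun I K => ∀ i,
      ∀ (β W : ℝ≥0) (u v : VV n → Fin m₁ → ℝ), PHyp n m₁ s D' A β W u v →
      eLpNorm (fun x => XI n I (fun y => χ y * F y (u y) i) x - XI n I (fun y => χ y * F y (v y) i) x) 2
        (volume.restrict D') ≤ K * W * β^s) ?_ ?_
    · intro I hI
      have hi : ∀ i, ∃ K : ℝ≥0, ∀ (β W : ℝ≥0) (u v : VV n → Fin m₁ → ℝ), PHyp n m₁ s D' A β W u v →
        eLpNorm (fun x => XI n I (fun y => χ y * F y (u y) i) x - XI n I (fun y => χ y * F y (v y) i) x) 2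
        (volume.restrict D') ≤ K * W * β^s := by
        intro i
        obtain ⟨Q, hQ, hQe⟩ := (Pol.comp (m := m₁) _ (hΦ i)).XI I
        obtain ⟨C, hC⟩ := hQ.est s (by omega) hD'.measurableSet hD'b A (by omega)
        set p := pe s (0 + I.length)
        have hp : 2 ≤ p := by
          rw [← pe_self s (by omega)]
          exact pe_anti s (by omega)
        set V : ℝ≥0∞ := (volume.restrict D') Set.univ ^ (1 / (2:ℝ≥0∞).toReal - 1 / p.toReal) with hV
        have hVfin : V ≠ ∞ := by
          refine ENNReal.rpow_ne_top_of_nonneg ?_ (measure_ne_top _ _)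
          rw [sub_nonneg]
          by_cases hpt : p = ∞
          · simp [hpt]
          · have h2 := (ENNReal.toReal_le_toReal (by norm_num) hpt).2 hp
            exact one_div_le_one_div_of_le (by norm_num) h2
        refine ⟨C * V.toNNReal, fun β W u v huv => ?_⟩
        have h1 := (hC β W u v huv).2.2
        rw [← hQe u huv.f_smooth, ← hQe v huv.g_smooth] at h1
        have hmeas : AEStronglyMeasurable (fun x => XI n I (fun y => χ y * F y (u y) i) x - XI n I (fun y => χ y * F y (v y) i) x)
            (volume.restrict D') := by
          have c1 : ContDiff ℝ (⊤:ℕ∞) (fun y => χ y * F y (u y) i) :=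
            (hΦ i).comp (contDiff_id.prodMk huv.f_smooth)
          have c2 : ContDiff ℝ (⊤:ℕ∞) (fun y => χ y * F y (v y) i) :=
            (hΦ i).comp (contDiff_id.prodMk huv.g_smooth)
          exact ((contDiff_XI I c1).continuous.sub (contDiff_XI I c2).continuous).aestronglyMeasurable
        refine (eLpNorm_le_eLpNorm_mul_rpow_measure_univ hp hmeas).trans ?_
        rw [← hV]
        refine (mul_le_mul_left h1 V).trans ?_
        push_cast
        rw [ENNReal.coe_toNNReal hVfin]
        calc (C:ℝ≥0∞) * W * β^(0 + I.length) * V = C * V * W * β^(0 + I.length) := by ring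
          _ ≤ C * V * W * β^s := by
            gcongr
            · exact_mod_cast huv.hβ
            · omega
      choose K hK using hi
      refine ⟨∑ i, K i, fun i β W u v huv => (hK i β W u v huv).trans ?_⟩
      gcongr
      exact_mod_cast Finset.single_le_sum (f := K) (fun _ _ => by positivity) (Finset.mem_univ i)
    · intro I C C' hCC h i β W u v huv
      refine (h i β W u v huv).trans ?_
      gcongr
  obtain ⟨K, hK⟩ := key
  refine ⟨fun _ _ => N * (m₂ * K), fun _ _ => by positivity, fun g hg hgc => ?_⟩
  have hP := hA g hg hgc
  set nf := fsNorm n D s f with hnf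
  set ng := fsNorm n D s g with hng
  set W := fsNorm n D s (fun x => f x - g x) with hW
  have nf0 : 0 ≤ nf := fsNorm_nonneg _ _ _
  have ng0 : 0 ≤ ng := fsNorm_nonneg _ _ _
  have W0 : 0 ≤ W := fsNorm_nonneg _ _ _
  have hsmF : ∀ h : VV n → Fin m₁ → ℝ, ContDiffOn ℝ (⊤:ℕ∞) h (closure D) →
      ContDiffOn ℝ (⊤:ℕ∞) (fun x => F x (h x)) D' := by
    intro h hh
    exact hF.comp (contDiffOn_id.prodMk (hh.mono (hDD.trans subset_closure)))
      (fun x hx => ⟨subset_closure (hDD hx), trivial⟩)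
  have hH : ContDiffOn ℝ (⊤:ℕ∞) (fun x => F x (f x) - F x (g x)) D' := (hsmF f hf).sub (hsmF g hg)
  have main : fsNorm n D' s (fun x => F x (f x) - F x (g x)) ≤ N * (m₂ * K * W * (1 + nf + ng)) := by
    refine hN D' _ _ (by positivity) (fun I _ => XI_aesm hD' _ hH I) fun I hI => ?_
    set w : Fin m₂ → VV n → ℝ := fun i x =>
      XI n I (fun y => χ y * F y (χ y • f y) i) x - XI n I (fun y => χ y * F y (χ y • g y) i) x with hw
    have hcomp : ∀ i, ∀ x ∈ D', XI n I (fun x => F x (f x) - F x (g x)) x i = w i x := by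
      intro i x hx
      rw [XI_apply I hD' hH i x hx]
      have c1 := contDiff_pi.1 (contDiff_pi.2 fun i => (hΦ i).comp (contDiff_id.prodMk hP.f_smooth)) i
      have c2 := contDiff_pi.1 (contDiff_pi.2 fun i => (hΦ i).comp (contDiff_id.prodMk hP.g_smooth)) i
      refine Eq.trans ?_ (XI_sub I hD' c1.contDiffOn c2.contDiffOn x hx)
      refine XI_congr I hD' (fun y hy => ?_) x hx
      simp [hχD' y hy]
    have hwm : ∀ i, AEStronglyMeasurable (fun x => ‖w i x‖) (volume.restrict D') := by
      intro i
      have c1 := (hΦ i).comp (contDiff_id.prodMk hP.f_smooth)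
      have c2 := (hΦ i).comp (contDiff_id.prodMk hP.g_smooth)
      exact ((contDiff_XI I c1).continuous.sub (contDiff_XI I c2).continuous).norm.aestronglyMeasurable
    calc eLpNorm (XI n I (fun x => F x (f x) - F x (g x))) 2 (volume.restrict D')
        ≤ eLpNorm (∑ i, fun x => ‖w i x‖) 2 (volume.restrict D') := by
          refine eLpNorm_mono_ae_real ?_
          filter_upwards [ae_restrict_mem hD'.measurableSet] with x hx
          rw [Finset.sum_apply]
          rw [pi_norm_le_iff_of_nonneg (by positivity)]
          intro i
          rw [hcomp i x hx]
          exact Finset.single_le_sum (f := fun i => ‖w i x‖) (fun _ _ => by positivity) (Finset.mem_univ i)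
      _ ≤ ∑ i, eLpNorm (fun x => ‖w i x‖) 2 (volume.restrict D') :=
          eLpNorm_sum_le (fun i _ => hwm i) (by norm_num)
      _ ≤ ∑ i : Fin m₂, ((K * W.toNNReal * (1 + nf.toNNReal + ng.toNNReal) : ℝ≥0) : ℝ≥0∞) := by
          refine Finset.sum_le_sum fun i _ => ?_
          rw [eLpNorm_norm]
          refine (hK I hI i _ _ _ _ hP).trans (le_of_eq ?_)
          rw [← ENNReal.coe_pow, ← NNReal.rpow_natCast, ← NNReal.rpow_mul, one_div,
            inv_mul_cancel₀ (by norm_cast; omega), NNReal.rpow_one]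
          push_cast
          rfl
      _ = ENNReal.ofReal (m₂ * K * W * (1 + nf + ng)) := by
          rw [Finset.sum_const, Finset.card_univ, Fintype.card_fin, ENNReal.ofReal, nsmul_eq_mul]
          norm_cast
          rw [← NNReal.coe_inj, Real.coe_toNNReal _ (by positivity)]
          push_cast
          rw [Real.coe_toNNReal _ W0, Real.coe_toNNReal _ nf0, Real.coe_toNNReal _ ng0]
          ring
  refine main.trans ?_
  have hl := sum_lower s (by omega) (N * (m₂ * K)) nf ng (by positivity) nf0 ng0
  calc N * (m₂ * K * W * (1 + nf + ng)) = W * (N * (m₂ * K) * (1 + nf + ng)) := by ring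
    _ ≤ _ := by gcongr

end
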